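/- For every k, w ∈ ℕ with k ≥ 7, the set obs_{≤i}(C_{w,k}) contains at least binom(3^{k-7} + w + 1, w + 1) pairwise non-isomorphic graphs. -/

import Mathlib

/-- A finite undirected multigraph without loops. -/
structure Multigraph where
  V : Type
  E : Type
  finV : Finite V
  finE : Finite E
  ends : E → V × V
  loopless : ∀ e, (ends e).1 ≠ (ends e).2

attribute [instance] Multigraph.finV Multigraph.finE

namespace Multigraph

/-- `δ_G(S)`: the number of edges of `G` with exactly one endpoint in `S`. -/
noncomputable def delta (G : Multigraph) (S : Set G.V) : ℕ :=
  {e : G.E | ¬ ((G.ends e).1 ∈ S ↔ (G.ends e).2 ∈ S)}.ncard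

/-- The width `cw_σ(G)` of an ordering, represented as an injective ranking `ρ : V → ℕ`. -/
noncomputable def cwOrd (G : Multigraph) (ρ : G.V → ℕ) : ℕ :=
  sSup {w | ∃ v : G.V, w = G.delta {u | ρ u ≤ ρ v}}

/-- The cutwidth of a multigraph. -/
noncomputable def cutwidth (G : Multigraph) : ℕ :=
  sInf {w | ∃ ρ : G.V → ℕ, Function.Injective ρ ∧ G.cwOrd ρ = w}

/-- Walks in a multigraph. -/
inductive Walk (G : Multigraph) : G.V → G.V → Type
  | nil (v : G.V) : Walk G v v
  | cons {u v w : G.V} (e : G.E)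
      (h : G.ends e = (u, v) ∨ G.ends e = (v, u)) (p : Walk G v w) : Walk G u w

namespace Walk

def edges {G : Multigraph} : ∀ {u v : G.V}, G.Walk u v → List G.E
  | _, _, .nil _ => []
  | _, _, .cons e _ p => e :: p.edges

def support {G : Multigraph} : ∀ {u v : G.V}, G.Walk u v → List G.V
  | _, _, .nil v => [v]
  | u, _, .cons _ _ p => u :: p.support

end Walk

def Connected (G : Multigraph) : Prop := ∀ u v : G.V, Nonempty (G.Walk u v)

/-- An immersion model of `H` in `G`. -/
structure ImmersionModel (H G : Multigraph) where
  vmap : H.V → G.V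
  inj : Function.Injective vmap
  emap : (e : H.E) → G.Walk (vmap (H.ends e).1) (vmap (H.ends e).2)
  isPath : ∀ e, ((emap e).support).Nodup
  edgeDisj : ∀ e e', e ≠ e' → ∀ f, f ∈ (emap e).edges → f ∉ (emap e').edges

/-- `H ≤_i G`. -/
def Immersion (H G : Multigraph) : Prop := Nonempty (ImmersionModel H G)

/-- A strong immersion model: no internal vertex of a path is a branch vertex. -/
structure StrongImmersionModel (H G : Multigraph) extends ImmersionModel H G where
  strong : ∀ e, ∀ x, x ∈ (emap e).support →
    x ≠ vmap (H.ends e).1 → x ≠ vmap (H.ends e).2 → x ∉ Set.range vmap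

/-- `H ≤_si G`. -/
def StrongImmersion (H G : Multigraph) : Prop := Nonempty (StrongImmersionModel H G)

/-- Isomorphism of multigraphs. -/
structure Iso (G H : Multigraph) where
  fv : G.V ≃ H.V
  fe : G.E ≃ H.E
  pres : ∀ e, H.ends (fe e) = (fv (G.ends e).1, fv (G.ends e).2)
           ∨ H.ends (fe e) = (fv (G.ends e).2, fv (G.ends e).1)

def Isomorphic (G H : Multigraph) : Prop := Nonempty (Iso G H)

/-- The minimal obstruction set of a class `C` with respect to a partial order `le`. -/
def obstructions (le : Multigraph → Multigraph → Prop) (C : Set Multigraph) :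
    Set Multigraph :=
  {G | G ∉ C ∧ ∀ G', le G' G → ¬ G'.Isomorphic G → G' ∈ C}

/-- `C_k`: the class of multigraphs of cutwidth at most `k`. -/
def cutwidthClass (k : ℕ) : Set Multigraph := {G | G.cutwidth ≤ k}

/-- The degree of a vertex (each parallel edge counts once at each endpoint). -/
noncomputable def degree (G : Multigraph) (v : G.V) : ℕ :=
  {e : G.E | (G.ends e).1 = v ∨ (G.ends e).2 = v}.ncard

/-- The number of `A`-blocks of an ordering `ρ`: the number of maximal runs of
consecutive (in `ρ`) vertices belonging to `A`, counted via block-starting vertices. -/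
noncomputable def blockCount (G : Multigraph) (ρ : G.V → ℕ) (A : Set G.V) : ℕ :=
  {v : G.V | v ∈ A ∧ ∀ u : G.V, ρ u < ρ v →
      ∃ w : G.V, w ∉ A ∧ ρ u ≤ ρ w ∧ ρ w < ρ v}.ncard

/-- The extension `G*` of a `k`-boundaried graph `(G, x)`. -/
def extension (G : Multigraph) {k : ℕ} (x : Fin k → G.V) : Multigraph where
  V := G.V ⊕ Fin k
  E := G.E ⊕ Fin k
  finV := inferInstance
  finE := inferInstance
  ends := Sum.elim (fun e => (Sum.inl (G.ends e).1, Sum.inl (G.ends e).2))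
                   (fun i => (Sum.inl (x i), Sum.inr i))
  loopless := by
    rintro (e | i)
    · simpa using G.loopless e
    · simp

/-- The join `𝐀 ⊕ 𝐁` of two `k`-boundaried graphs. -/
def join {k : ℕ} (A B : Multigraph) (x : Fin k → A.V) (y : Fin k → B.V) : Multigraph where
  V := A.V ⊕ B.V
  E := (A.E ⊕ B.E) ⊕ Fin k
  finV := inferInstance
  finE := inferInstance
  ends := Sum.elim
    (Sum.elim (fun e => (Sum.inl (A.ends e).1, Sum.inl (A.ends e).2))
              (fun e => (Sum.inr (B.ends e).1, Sum.inr (B.ends e).2)))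
    (fun i => (Sum.inl (x i), Sum.inr (y i)))
  loopless := by
    rintro ((e | e) | i)
    · simpa using A.loopless e
    · simpa using B.loopless e
    · simp

/-- An `ℓ`-bucketing of an ordering `ρ` (buckets indexed 1,…,ℓ). -/
def IsBucketing (G : Multigraph) (ρ : G.V → ℕ) (ℓ : ℕ) (T : G.V → ℕ) : Prop :=
  (∀ v, 1 ≤ T v ∧ T v ≤ ℓ) ∧ ∀ u v : G.V, ρ u ≤ ρ v → T u ≤ T v

/-- `width(G,σ,T,i)`: the maximum size of a cut in `cuts(G,σ,T,i)`; these cuts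
are described by their left side `S`, which contains all buckets before `i`,
a `σ`-downward-closed part of bucket `i`, and nothing else. -/
noncomputable def bucketWidth (G : Multigraph) (ρ : G.V → ℕ) (T : G.V → ℕ) (i : ℕ) : ℕ :=
  sSup {w | ∃ S : Set G.V,
    (∀ v, T v < i → v ∈ S) ∧ (∀ v ∈ S, T v ≤ i) ∧
    (∀ u v : G.V, T u = i → T v = i → ρ u ≤ ρ v → v ∈ S → u ∈ S) ∧
    w = G.delta S}

/-- A `(k,ℓ)`-bucket interface. -/
structure BucketInterface (k ℓ : ℕ) where
  b : Fin k → ℕ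
  b' : Fin k → ℕ
  mu : ℕ → ℕ
  mu' : ℕ → ℕ
  b_mem : ∀ i, b i ∈ Set.Icc 1 ℓ
  b'_mem : ∀ i, b' i ∈ Set.Icc 1 ℓ
  mu_le : ∀ j, mu j ≤ k
  mu'_le : ∀ j, mu' j ≤ k

/-- A `k`-boundaried graph `(G, x)` conforms with a `(k,ℓ)`-bucket interface. -/
def Conforms {k : ℕ} (G : Multigraph) (x : Fin k → G.V) (ℓ : ℕ)
    (I : BucketInterface k ℓ) : Prop :=
  ∃ ρ : (G.extension x).V → ℕ, Function.Injective ρ ∧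
  ∃ T : (G.extension x).V → ℕ, (G.extension x).IsBucketing ρ ℓ T ∧
    (∀ v : G.V, Odd (T (Sum.inl v))) ∧
    (∀ i : Fin k, Even (T (Sum.inr i))) ∧
    (∀ i : Fin k, T (Sum.inl (x i)) = I.b i) ∧
    (∀ i : Fin k, T (Sum.inr i) = I.b' i) ∧
    (∀ j ∈ Set.Icc 1 ℓ,
      G.bucketWidth (fun v => ρ (Sum.inl v)) (fun v => T (Sum.inl v)) j ≤ I.mu j) ∧
    (∀ j ∈ Set.Icc 1 ℓ, (G.extension x).bucketWidth ρ T j ≤ I.mu' j)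

/-- `m` pairwise edge-disjoint paths between the sets `X` and `Y`. -/
def ConnectorBetween (G : Multigraph) (X Y : Set G.V) (m : ℕ) : Prop :=
  ∃ (s t : Fin m → G.V) (P : (i : Fin m) → G.Walk (s i) (t i)),
    (∀ i, s i ∈ X) ∧ (∀ i, t i ∈ Y) ∧ (∀ i, (P i).support.Nodup) ∧
    ∀ i j, i ≠ j → ∀ f, f ∈ (P i).edges → f ∉ (P j).edges

/-- A linked ordering. -/
def Linked (G : Multigraph) (ρ : G.V → ℕ) : Prop :=
  ∀ u u' : G.V, ρ u ≤ ρ u' →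
    G.ConnectorBetween {z | ρ z ≤ ρ u} {z | ¬ ρ z ≤ ρ u'}
      (sInf {w | ∃ v : G.V, ρ u ≤ ρ v ∧ ρ v ≤ ρ u' ∧ w = G.delta {z | ρ z ≤ ρ v}})

/-- The multigraph obtained by deleting a set of edges. -/
def deleteEdges (G : Multigraph) (F : Set G.E) : Multigraph where
  V := G.V
  E := {e : G.E // e ∉ F}
  finV := G.finV
  finE := inferInstance
  ends e := G.ends e.1
  loopless e := G.loopless e.1

/-- `dcw_k(G)`: minimum number of edges to delete to reach cutwidth at most `k`. -/
noncomputable def dcw (k : ℕ) (G : Multigraph) : ℕ :=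
  sInf {w | ∃ F : Set G.E, (G.deleteEdges F).cutwidth ≤ k ∧ F.ncard = w}

/-- The class `C_{w,k}`. -/
def dcwClass (w k : ℕ) : Set Multigraph := {G | dcw k G ≤ w}

/-- Induced subgraph `G[X]`. -/
def induce (G : Multigraph) (X : Set G.V) : Multigraph where
  V := X
  E := {e : G.E // (G.ends e).1 ∈ X ∧ (G.ends e).2 ∈ X}
  finV := inferInstance
  finE := inferInstance
  ends e := (⟨(G.ends e.1).1, e.2.1⟩, ⟨(G.ends e.1).2, e.2.2⟩)
  loopless := by
    intro e h
    exact G.loopless e.1 (Subtype.ext_iff.mp h)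

/-- A graph is `ℋ`-immersion-free if it contains no member of `ℋ` as an immersion. -/
def ImmersionFree (H : Set Multigraph) (G : Multigraph) : Prop :=
  ∀ X ∈ H, ¬ Immersion X G

/-- `aic_ℋ(G)`: minimum number of edge deletions to reach an `ℋ`-immersion-free graph. -/
noncomputable def aic (H : Set Multigraph) (G : Multigraph) : ℕ :=
  sInf {w | ∃ F : Set G.E, ImmersionFree H (G.deleteEdges F) ∧ F.ncard = w}

/-- The class `C_{w,ℋ}`. -/
def aicClass (w : ℕ) (H : Set Multigraph) : Set Multigraph := {G | aic H G ≤ w}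

/-- `ℋ` is a `≤_i`-antichain. -/
def IsAntichainImm (H : Set Multigraph) : Prop :=
  ∀ G₁ ∈ H, ∀ G₂ ∈ H, Immersion G₁ G₂ → Isomorphic G₁ G₂

/-- Disjoint union of two multigraphs. -/
def disjUnion (G H : Multigraph) : Multigraph where
  V := G.V ⊕ H.V
  E := G.E ⊕ H.E
  finV := inferInstance
  finE := inferInstance
  ends := Sum.elim (fun e => (Sum.inl (G.ends e).1, Sum.inl (G.ends e).2))
                   (fun e => (Sum.inr (H.ends e).1, Sum.inr (H.ends e).2))
  loopless := by
    rintro (e | e)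
    · simpa using G.loopless e
    · simpa using H.loopless e

/-- Disjoint union of a finite family of multigraphs. -/
def sigmaUnion {m : ℕ} (Gs : Fin m → Multigraph) : Multigraph where
  V := Σ i, (Gs i).V
  E := Σ i, (Gs i).E
  finV := inferInstance
  finE := inferInstance
  ends e := (⟨e.1, ((Gs e.1).ends e.2).1⟩, ⟨e.1, ((Gs e.1).ends e.2).2⟩)
  loopless := by
    intro e h
    exact (Gs e.1).loopless e.2 (by simpa using h)

/-- `cw_σ(G,X) = δ_G(X) + cw_{σ_X}(G[X])`. -/
noncomputable def cwRel (G : Multigraph) (ρ : G.V → ℕ) (X : Set G.V) : ℕ :=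
  G.delta X + (G.induce X).cwOrd (fun v => ρ v.val)

/-- Membership in the family of prefixes relevant to `X`-linkedness: the complement
of `X` (the prefix right before `X` starts) and the prefixes ending inside `X`. -/
def IsXPrefix (G : Multigraph) (ρ : G.V → ℕ) (X : Set G.V) (P : Set G.V) : Prop :=
  P = Xᶜ ∨ ∃ v ∈ X, P = {z | ρ z ≤ ρ v}

/-- An `X`-linked ordering. -/
def XLinked (G : Multigraph) (ρ : G.V → ℕ) (X : Set G.V) : Prop :=
  (∀ u v : G.V, u ∉ X → v ∈ X → ρ u < ρ v) ∧
  ∀ P P' : Set G.V, G.IsXPrefix ρ X P → G.IsXPrefix ρ X P' → P ⊆ P' →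
    G.ConnectorBetween P P'ᶜ
      (sInf {w | ∃ Q : Set G.V, G.IsXPrefix ρ X Q ∧ P ⊆ Q ∧ Q ⊆ P' ∧ w = G.delta Q})

end Multigraph

namespace Multigraph

/-! ### Cuts -/

/-- The edge `e` crosses the cut `S`. -/
def Cross (G : Multigraph) (S : Set G.V) (e : G.E) : Prop :=
  ¬ ((G.ends e).1 ∈ S ↔ (G.ends e).2 ∈ S)

/-- The edge `e` is incident with `v`. -/
def Inc (G : Multigraph) (e : G.E) (v : G.V) : Prop :=
  (G.ends e).1 = v ∨ (G.ends e).2 = v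

lemma delta_eq (G : Multigraph) (S : Set G.V) : G.delta S = {e | G.Cross S e}.ncard := rfl

lemma delta_empty (G : Multigraph) : G.delta ∅ = 0 := by
  simp [delta]

lemma delta_univ (G : Multigraph) : G.delta Set.univ = 0 := by
  simp [delta]

lemma delta_compl (G : Multigraph) (S : Set G.V) : G.delta Sᶜ = G.delta S := by
  simp only [delta, Set.mem_compl_iff, not_iff_not]

lemma cross_of_delta_pos (G : Multigraph) (S : Set G.V) (h : 1 ≤ G.delta S) :
    ∃ e, G.Cross S e := by
  have : {e | G.Cross S e}.Nonempty := by
    rw [← Set.ncard_pos]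
    exact h
  exact this

/-- At most one edge is incident with `x`. -/
def Deg1 (G : Multigraph) (x : G.V) : Prop := ∀ e e', G.Inc e x → G.Inc e' x → e = e'

lemma Deg1.delta_le {G : Multigraph} {x : G.V} (h : G.Deg1 x) (S T : Set G.V)
    (hST : ∀ u, u ≠ x → (u ∈ S ↔ u ∈ T)) : G.delta S ≤ G.delta T + 1 := by
  have hsub : {e | G.Cross S e} ⊆ {e | G.Cross T e} ∪ {e | G.Inc e x} := by
    intro e he
    by_cases hi : G.Inc e x
    · exact Or.inr hi
    · left
      simp only [Inc, not_or] at hi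
      simp only [Set.mem_ofPred_eq, Cross, hST _ hi.1, hST _ hi.2] at he ⊢
      exact he
  have h1 : {e | G.Inc e x}.ncard ≤ 1 := by
    rw [Set.ncard_le_one]
    intro a ha b hb
    exact h a b ha hb
  calc G.delta S ≤ ({e | G.Cross T e} ∪ {e | G.Inc e x}).ncard :=
        Set.ncard_le_ncard hsub
    _ ≤ _ := (Set.ncard_union_le _ _).trans (by rw [delta_eq]; omega)

lemma Deg1.delta_empty_le {G : Multigraph} {x : G.V} (h : G.Deg1 x) (S : Set G.V)
    (hS : ∀ u, u ≠ x → u ∉ S) : G.delta S ≤ 1 := by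
  have := h.delta_le S ∅ (fun u hu => by simp [hS u hu])
  rwa [delta_empty] at this

lemma Deg1.delta_univ_le {G : Multigraph} {x : G.V} (h : G.Deg1 x) (S : Set G.V)
    (hS : ∀ u, u ≠ x → u ∈ S) : G.delta S ≤ 1 := by
  have := h.delta_le S Set.univ (fun u hu => by simp [hS u hu])
  rwa [delta_univ] at this

/-- If the edge `f` at the degree one vertex `x` does not cross `S`, then moving `x` to
the other side increases the cut. -/
lemma Deg1.delta_succ_le {G : Multigraph} {x : G.V} (h : G.Deg1 x) (S T : Set G.V)
    (hST : ∀ u, u ≠ x → (u ∈ S ↔ u ∈ T)) (hx : ¬ (x ∈ S ↔ x ∈ T)) (f : G.E)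
    (hf : G.Inc f x) (hc : ¬ G.Cross S f) : G.delta S + 1 ≤ G.delta T := by
  have hfT : G.Cross T f := by
    have hl := G.loopless f
    unfold Cross at *
    rcases hf with hf | hf
    · have := hST (G.ends f).2 (by rw [← hf]; exact hl.symm)
      rw [hf] at hc ⊢
      tauto
    · have := hST (G.ends f).1 (by rw [← hf]; exact hl)
      rw [hf] at hc ⊢
      tauto
  have hsub : insert f {e | G.Cross S e} ⊆ {e | G.Cross T e} := by
    intro e he
    rcases he with rfl | he
    · exact hfT
    · by_cases hi : G.Inc e x
      · have := h e f hi hf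
        subst this
        exact absurd he hc
      · simp only [Inc, not_or] at hi
        simp only [Set.mem_ofPred_eq, Cross, hST _ hi.1, hST _ hi.2] at he ⊢
        exact he
  have := Set.ncard_le_ncard hsub
  rwa [Set.ncard_insert_of_notMem hc] at this

/-! ### Layouts -/

/-- There is an ordering all of whose cuts satisfy `P`. -/
def HasLay (V : Type) (P : Set V → Prop) : Prop :=
  ∃ ρ : V → ℤ, Function.Injective ρ ∧ ∀ t, P {u | ρ u ≤ t}

lemma hasLay_of {V : Type} [Finite V] {α : Type} [LinearOrder α] {P : Set V → Prop}
    (f : V → α) (hf : Function.Injective f) (h0 : P ∅) (h : ∀ v, P {u | f u ≤ f v}) :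
    HasLay V P := by
  let r : V → ℤ := fun v => (({u | f u < f v} : Set V).ncard : ℤ)
  have hlt : ∀ u v, f u < f v → r u < r v := by
    intro u v huv
    have : ({w | f w < f u} : Set V).ncard < ({w | f w < f v} : Set V).ncard := by
      refine Set.ncard_lt_ncard ?_ (Set.toFinite _)
      refine ⟨fun w hw => lt_trans hw huv, fun hh => ?_⟩
      exact lt_irrefl _ (hh huv : f u < f u)
    simpa [r] using this
  have hle : ∀ u v, r u ≤ r v ↔ f u ≤ f v := by
    intro u v
    constructor
    · intro h1
      by_contra h2
      exact absurd (hlt v u (not_le.mp h2)) (not_lt.mpr h1)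
    · intro h1
      rcases h1.lt_or_eq with h1 | h1
      · exact (hlt _ _ h1).le
      · rw [hf h1]
  refine ⟨r, ?_, ?_⟩
  · intro u v huv
    exact hf (le_antisymm ((hle _ _).mp huv.le) ((hle _ _).mp huv.ge))
  · intro t
    rcases ({u | r u ≤ t} : Set V).eq_empty_or_nonempty with he | hne
    · rw [he]; exact h0
    · obtain ⟨v, hv, hmax⟩ := Set.exists_max_image _ r (Set.toFinite _) hne
      have : {u | r u ≤ t} = {u | f u ≤ f v} := by
        ext u
        constructor
        · intro hu
          exact (hle _ _).mp (hmax u hu)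
        · intro hu
          exact le_trans ((hle _ _).mpr hu) hv
      rw [this]
      exact h v

lemma HasLay.mono {V : Type} {P Q : Set V → Prop} (h : HasLay V P) (hPQ : ∀ S, P S → Q S) :
    HasLay V Q := by
  obtain ⟨ρ, h1, h2⟩ := h
  exact ⟨ρ, h1, fun t => hPQ _ (h2 t)⟩

lemma HasLay.rev {V : Type} {P : Set V → Prop} (h : HasLay V P) :
    HasLay V (fun S => P Sᶜ) := by
  obtain ⟨ρ, h1, h2⟩ := h
  refine ⟨fun v => - ρ v, fun u v huv => h1 (by simpa using huv), fun t => ?_⟩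
  have : {u | -ρ u ≤ t}ᶜ = {u | ρ u ≤ -t - 1} := by
    ext u
    simp only [Set.mem_compl_iff, Set.mem_ofPred_eq]
    omega
  change P {u | -ρ u ≤ t}ᶜ
  rw [this]
  exact h2 _

lemma cutwidth_le {G : Multigraph} {k : ℕ} (h : HasLay G.V (fun S => G.delta S ≤ k)) :
    G.cutwidth ≤ k := by
  obtain ⟨ρ, h1, h2⟩ := h
  obtain ⟨m, hm⟩ : ∃ m : ℤ, ∀ v, m ≤ ρ v := by
    obtain ⟨m, hm⟩ := (Set.finite_range ρ).bddBelow
    exact ⟨m, fun v => hm ⟨v, rfl⟩⟩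
  have hinj : Function.Injective (fun v => (ρ v - m).toNat) := by
    intro u v huv
    apply h1
    have := hm u
    have := hm v
    simp only at huv
    omega
  refine le_trans (Nat.sInf_le ⟨_, hinj, rfl⟩) ?_
  apply csSup_le'
  rintro w ⟨v, rfl⟩
  have : {u | (ρ u - m).toNat ≤ (ρ v - m).toNat} = {u | ρ u ≤ ρ v} := by
    ext u
    have := hm u
    have := hm v
    simp only [Set.mem_ofPred_eq]
    omega
  rw [this]
  exact h2 _

lemma exists_of_cutwidth_le {G : Multigraph} {k : ℕ} (h : G.cutwidth ≤ k) :
    HasLay G.V (fun S => G.delta S ≤ k) := by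
  have hne : {w | ∃ ρ : G.V → ℕ, Function.Injective ρ ∧ G.cwOrd ρ = w}.Nonempty := by
    obtain ⟨n, ⟨e⟩⟩ := Finite.exists_equiv_fin G.V
    exact ⟨_, fun v => (e v).val, fun u v huv => e.injective (Fin.ext huv), rfl⟩
  obtain ⟨ρ, hρ, hw⟩ := Nat.sInf_mem hne
  refine hasLay_of ρ hρ (by simp [delta_empty]) (fun v => ?_)
  refine le_trans ?_ (hw.le.trans h)
  apply le_csSup
  · refine ⟨Nat.card G.E, ?_⟩
    rintro w ⟨v, rfl⟩
    exact Set.ncard_le_card _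
  · exact ⟨v, rfl⟩

lemma ncard_sigma {ι : Type} [Fintype ι] {E : ι → Type} [∀ i, Finite (E i)]
    (p : (Σ i, E i) → Prop) :
    {e | p e}.ncard = ∑ i, {e : E i | p ⟨i, e⟩}.ncard := by
  have h : ∀ {α : Type} (q : α → Prop), {e | q e}.ncard = Nat.card {e // q e} := fun q => rfl
  simp only [h]
  rw [← Nat.card_sigma]
  apply Nat.card_congr
  exact ⟨fun e => ⟨e.1.1, e.1.2, e.2⟩, fun e => ⟨⟨e.1, e.2.1⟩, e.2.2⟩, fun _ => rfl, fun _ => rfl⟩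

end Multigraph

namespace Multigraph

/-! ### Immersions -/

lemma Walk.exists_cross {G : Multigraph} (S : Set G.V) :
    ∀ {u v : G.V} (p : G.Walk u v), ¬ (u ∈ S ↔ v ∈ S) → ∃ g ∈ p.edges, G.Cross S g
  | _, _, .nil _, h => absurd Iff.rfl h
  | u, w, .cons (v := v) e he p, h => by
    by_cases hc : G.Cross S e
    · exact ⟨e, by simp [Walk.edges], hc⟩
    · have huv : u ∈ S ↔ v ∈ S := by
        unfold Cross at hc
        rcases he with he | he <;> rw [he] at hc <;> tauto
      obtain ⟨g, hg, hgc⟩ := Walk.exists_cross S p (by tauto)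
      exact ⟨g, by simp [Walk.edges, hg], hgc⟩

lemma Walk.start_mem_support {G : Multigraph} {u v : G.V} (p : G.Walk u v) : u ∈ p.support := by
  cases p <;> simp [Walk.support]

lemma Walk.inc_mem_support {G : Multigraph} :
    ∀ {u v : G.V} (p : G.Walk u v) (g : G.E), g ∈ p.edges → ∀ x, G.Inc g x → x ∈ p.support
  | _, _, .nil _, g, h, _, _ => by simp [Walk.edges] at h
  | u, w, .cons (v := v) e he p, g, h, x, hx => by
    simp only [Walk.edges, List.mem_cons] at h
    simp only [Walk.support, List.mem_cons]
    rcases h with rfl | h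
    · have hv := p.start_mem_support
      unfold Inc at hx
      rcases he with he | he <;> rw [he] at hx <;> rcases hx with hx | hx <;> simp only at hx <;>
        subst hx <;> tauto
    · exact Or.inr (Walk.inc_mem_support p g h x hx)

/-- A proper immersion avoids an edge, or merges two adjacent edges. -/
lemma reduction {H G : Multigraph} (M : ImmersionModel H G) (hiso : ¬ H.Isomorphic G)
    (hni : ∀ v, ∃ e, G.Inc e v) :
    (∃ e, ∀ h, e ∉ (M.emap h).edges) ∨
    (∃ e f, e ≠ f ∧ (∃ b, G.Inc e b ∧ G.Inc f b) ∧
      ∀ S h, H.Cross (M.vmap ⁻¹' S) h → G.Cross S e → G.Cross S f →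
        ∃ g ∈ (M.emap h).edges, G.Cross S g ∧ g ≠ e ∧ g ≠ f) := by
  by_contra hcon
  push Not at hcon
  obtain ⟨hused, hlift⟩ := hcon
  apply hiso
  -- every path is a single edge
  have hsingle : ∀ h, ∃ g, (M.emap h).edges = [g] ∧
      (G.ends g = (M.vmap (H.ends h).1, M.vmap (H.ends h).2) ∨
       G.ends g = (M.vmap (H.ends h).2, M.vmap (H.ends h).1)) := by
    intro h
    have hl := H.loopless h
    have hne : M.vmap (H.ends h).1 ≠ M.vmap (H.ends h).2 := fun hh => hl (M.inj hh)
    have hpath := M.isPath h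
    have hdisj := M.edgeDisj h
    -- facts about the walk, generalised
    have key : ∀ (u v : G.V) (p : G.Walk u v), u ≠ v → p.support.Nodup →
        (∃ g, p.edges = [g] ∧ (G.ends g = (u, v) ∨ G.ends g = (v, u))) ∨
        (∃ e f, e ∈ p.edges ∧ f ∈ p.edges ∧ e ≠ f ∧ (∃ b, G.Inc e b ∧ G.Inc f b) ∧
          ∀ S : Set G.V, ¬ (u ∈ S ↔ v ∈ S) → G.Cross S e → G.Cross S f →
            ∃ g ∈ p.edges, G.Cross S g ∧ g ≠ e ∧ g ≠ f) := by
      intro u v p huv hp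
      cases p with
      | nil => exact absurd rfl huv
      | @cons _ b _ e he p =>
        cases p with
        | nil => exact Or.inl ⟨e, by simp [Walk.edges], he⟩
        | @cons _ c _ f hf p =>
          right
          simp only [Walk.support, List.nodup_cons, List.mem_cons, not_or] at hp
          obtain ⟨⟨hub, hup⟩, hbp, hpn⟩ := hp
          have hincu : G.Inc e u := by
            unfold Inc; rcases he with he | he <;> simp [he]
          have hincb : G.Inc e b := by
            unfold Inc; rcases he with he | he <;> simp [he]
          have hincb' : G.Inc f b := by
            unfold Inc; rcases hf with hf | hf <;> simp [hf]
          have hcp := p.start_mem_support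
          have hef : e ≠ f := by
            rintro rfl
            have huc : u ≠ c := by rintro rfl; exact hup hcp
            unfold Inc at hincu
            rcases hf with hf | hf <;> rw [hf] at hincu <;>
              rcases hincu with h1 | h1 <;> simp only at h1 <;> first
                | exact hub h1.symm
                | exact huc h1.symm
          refine ⟨e, f, by simp [Walk.edges], by simp [Walk.edges], hef, ⟨b, hincb, hincb'⟩, ?_⟩
          intro S hS hce hcf
          have h1 : ¬ (u ∈ S ↔ b ∈ S) := by
            unfold Cross at hce
            rcases he with he | he <;> rw [he] at hce <;> tauto
          have h2 : ¬ (b ∈ S ↔ c ∈ S) := by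
            unfold Cross at hcf
            rcases hf with hf | hf <;> rw [hf] at hcf <;> tauto
          obtain ⟨g, hg, hgc⟩ := p.exists_cross S (by tauto)
          refine ⟨g, by simp [Walk.edges, hg], hgc, ?_, ?_⟩
          · rintro rfl
            exact hup (p.inc_mem_support _ hg _ hincu)
          · rintro rfl
            exact hbp (p.inc_mem_support _ hg _ hincb')
    rcases key _ _ (M.emap h) hne hpath with hk | ⟨e, f, he, hf, hef, hb, hk⟩
    · exact hk
    · exfalso
      obtain ⟨S, h', hS, hce, hcf, hno⟩ := hlift e f hef hb
      by_cases hh : h' = h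
      · subst hh
        obtain ⟨g, hg, hgc, h1, h2⟩ := hk S hS hce hcf
        exact h2 (hno g hg hgc h1)
      · obtain ⟨g, hg, hgc⟩ := (M.emap h').exists_cross S hS
        have h1 : g ≠ e := by
          rintro rfl; exact M.edgeDisj h' h hh _ hg he
        have h2 : g ≠ f := by
          rintro rfl; exact M.edgeDisj h' h hh _ hg hf
        exact h2 (hno g hg hgc h1)
  choose fe hfe hends using hsingle
  have hbij : Function.Bijective fe := by
    constructor
    · intro a b hab
      by_contra hne
      exact M.edgeDisj a b hne (fe a) (by simp [hfe]) (by simp [hfe, hab])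
    · intro g
      obtain ⟨h, hh⟩ := hused g
      rw [hfe] at hh
      exact ⟨h, (List.mem_singleton.mp hh).symm⟩
  have hvb : Function.Bijective M.vmap := by
    refine ⟨M.inj, fun v => ?_⟩
    obtain ⟨g, hg⟩ := hni v
    obtain ⟨h, rfl⟩ := hbij.2 g
    unfold Inc at hg
    rcases hends h with h1 | h1 <;> rw [h1] at hg <;> rcases hg with hg | hg <;> exact ⟨_, hg⟩
  exact ⟨⟨Equiv.ofBijective _ hvb, Equiv.ofBijective _ hbij, hends⟩⟩

end Multigraph

namespace Multigraph

/-! ### Good graphs: rooted obstructions for cutwidth -/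

open Classical in
/-- Saving when the edge `e` is deleted. -/
noncomputable def b1 (G : Multigraph) (e : G.E) (S : Set G.V) : ℕ :=
  if G.Cross S e then 1 else 0

open Classical in
/-- Saving when the edges `e`, `f` are lifted. -/
noncomputable def b2 (G : Multigraph) (e f : G.E) (S : Set G.V) : ℕ :=
  if G.Cross S e ∧ G.Cross S f then 2 else 0

/-- A minimal obstruction for cutwidth at most `k`, with two pendant vertices `x`, `y`. -/
structure Good (k : ℕ) (G : Multigraph) (x y : G.V) : Prop where
  lower : ∀ ρ : G.V → ℤ, Function.Injective ρ → ∃ t, k + 1 ≤ G.delta {u | ρ u ≤ t}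
  conn : ∀ S, G.delta S = 0 → S = ∅ ∨ S = Set.univ
  del : ∀ e, HasLay G.V (fun S => G.delta S ≤ k + G.b1 e S)
  lift : ∀ e f, e ≠ f → (∃ b, G.Inc e b ∧ G.Inc f b) →
    HasLay G.V (fun S => G.delta S ≤ k + G.b2 e f S)
  ne : x ≠ y
  degx : G.Deg1 x
  degy : G.Deg1 y
  lastx : HasLay G.V (fun S => G.delta S ≤ k + 1 ∧ (x ∈ S → S = Set.univ))
  lasty : HasLay G.V (fun S => G.delta S ≤ k + 1 ∧ (y ∈ S → S = Set.univ))

lemma Good.no_isolated {k : ℕ} {G : Multigraph} {x y : G.V} (h : Good k G x y) (v : G.V) :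
    ∃ e, G.Inc e v := by
  have : 1 ≤ G.delta {v} := by
    by_contra hc
    rcases h.conn {v} (by omega) with h1 | h1
    · exact Set.singleton_ne_empty v h1
    · have hx : x ∈ ({v} : Set G.V) := by rw [h1]; trivial
      have hy : y ∈ ({v} : Set G.V) := by rw [h1]; trivial
      exact h.ne (hx.trans hy.symm)
  obtain ⟨e, he⟩ := G.cross_of_delta_pos _ this
  refine ⟨e, ?_⟩
  unfold Cross at he
  unfold Inc
  simp only [Set.mem_singleton_iff] at he
  tauto

lemma Good.firstx {k : ℕ} {G : Multigraph} {x y : G.V} (h : Good k G x y) :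
    HasLay G.V (fun S => G.delta S ≤ k + 1 ∧ (x ∉ S → S = ∅)) := by
  refine h.lastx.rev.mono ?_
  rintro S ⟨h1, h2⟩
  refine ⟨by rwa [delta_compl] at h1, fun hx => ?_⟩
  have := h2 hx
  rwa [Set.compl_univ_iff] at this

section wedge

variable (A : Fin 3 → Multigraph) (x : ∀ i, (A i).V)

/-- Vertices of the wedge. -/
abbrev WV : Type := Option (Σ i, {v : (A i).V // v ≠ x i})

open Classical in
/-- Inclusion of a part in the wedge. -/
noncomputable def winc (i : Fin 3) (v : (A i).V) : WV A x :=
  if h : v = x i then none else some ⟨i, v, h⟩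

lemma winc_root (i : Fin 3) : winc A x i (x i) = none := by simp [winc]

lemma winc_ne (i : Fin 3) (v : (A i).V) (h : v ≠ x i) : winc A x i v = some ⟨i, v, h⟩ := by
  simp [winc, h]

lemma winc_inj (i : Fin 3) : Function.Injective (winc A x i) := by
  intro u v huv
  by_cases hu : u = x i <;> by_cases hv : v = x i
  · rw [hu, hv]
  · subst hu; rw [winc_root, winc_ne _ _ _ _ hv] at huv; simp at huv
  · subst hv; rw [winc_root, winc_ne _ _ _ _ hu] at huv; simp at huv
  · rw [winc_ne _ _ _ _ hu, winc_ne _ _ _ _ hv] at huv; simpa using huv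

lemma winc_eq_ne {i j : Fin 3} {u : (A i).V} {v : (A j).V} (hij : i ≠ j)
    (h : winc A x i u = winc A x j v) : u = x i ∧ v = x j := by
  by_cases hu : u = x i <;> by_cases hv : v = x j
  · exact ⟨hu, hv⟩
  · subst hu; rw [winc_root, winc_ne _ _ _ _ hv] at h; simp at h
  · subst hv; rw [winc_root, winc_ne _ _ _ _ hu] at h; simp at h
  · rw [winc_ne _ _ _ _ hu, winc_ne _ _ _ _ hv] at h; simp [hij] at h

lemma winc_surj (w : WV A x) : ∃ i v, w = winc A x i v := by
  rcases w with _ | ⟨i, v, h⟩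
  · exact ⟨0, x 0, (winc_root A x 0).symm⟩
  · exact ⟨i, v, (winc_ne A x i v h).symm⟩

/-- The graph obtained by identifying the roots of three graphs. -/
noncomputable def wedge : Multigraph where
  V := WV A x
  E := Σ i, (A i).E
  finV := inferInstance
  finE := inferInstance
  ends e := (winc A x e.1 ((A e.1).ends e.2).1, winc A x e.1 ((A e.1).ends e.2).2)
  loopless := fun e h => (A e.1).loopless e.2 (winc_inj A x e.1 h)

lemma wedge_cross (S : Set (wedge A x).V) (i : Fin 3) (e : (A i).E) :
    (wedge A x).Cross S ⟨i, e⟩ ↔ (A i).Cross (winc A x i ⁻¹' S) e := Iff.rfl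

lemma wedge_delta (S : Set (wedge A x).V) :
    (wedge A x).delta S = ∑ i, (A i).delta (winc A x i ⁻¹' S) := by
  rw [delta_eq]
  exact ncard_sigma (fun e : Σ i, (A i).E => (wedge A x).Cross S e)

/-- Concatenated layout of a wedge; `m` is the part containing the identified vertex. -/
lemma wedge_lay (pos : Fin 3 → ℕ) (hpos : Function.Injective pos)
    (σ : ∀ i, (A i).V → ℤ) (hσ : ∀ i, Function.Injective (σ i)) (m : Fin 3)
    (Q : (∀ i, Set (A i).V) → Prop)
    (h0 : Q (fun _ => ∅))
    (hQ : ∀ c s, ∀ B : ∀ i, Set (A i).V,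
      (∀ i, x i ∈ B i ↔ (pos m < c ∨ pos m = c ∧ σ m (x m) ≤ s)) →
      (∀ i u, u ≠ x i → (u ∈ B i ↔ (pos i < c ∨ pos i = c ∧ σ i u ≤ s))) → Q B) :
    HasLay (wedge A x).V (fun S => Q (fun i => winc A x i ⁻¹' S)) := by
  let f : WV A x → ℕ ×ₗ ℤ := fun w => match w with
    | none => toLex (pos m, σ m (x m))
    | some ⟨i, v, _⟩ => toLex (pos i, σ i v)
  have hf : Function.Injective f := by
    intro u v huv
    rcases u with _ | ⟨i, u, hu⟩ <;> rcases v with _ | ⟨j, v, hv⟩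
    · rfl
    · exfalso
      simp only [f, EmbeddingLike.apply_eq_iff_eq, Prod.mk.injEq] at huv
      obtain ⟨h1, h2⟩ := huv
      have := hpos h1
      subst this
      exact hv (hσ _ h2).symm
    · exfalso
      simp only [f, EmbeddingLike.apply_eq_iff_eq, Prod.mk.injEq] at huv
      obtain ⟨h1, h2⟩ := huv
      have := hpos h1
      subst this
      exact hu (hσ _ h2)
    · simp only [f, EmbeddingLike.apply_eq_iff_eq, Prod.mk.injEq] at huv
      obtain ⟨h1, h2⟩ := huv
      have := hpos h1
      subst this
      have := hσ _ h2
      subst this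
      rfl
  refine hasLay_of (V := (wedge A x).V) f hf h0 (fun w => ?_)
  obtain ⟨⟨c, s⟩, hcs⟩ : ∃ p : ℕ × ℤ, f w = toLex p := ⟨ofLex (f w), rfl⟩
  apply hQ c s
  · intro i
    change f (winc A x i (x i)) ≤ f w ↔ _
    rw [winc_root, hcs]
    exact Prod.Lex.toLex_le_toLex
  · intro i u hu
    change f (winc A x i u) ≤ f w ↔ _
    rw [winc_ne _ _ _ _ hu, hcs]
    exact Prod.Lex.toLex_le_toLex

lemma three_cover {p q r : Fin 3} (hpq : p ≠ q) (hpr : p ≠ r) (hqr : q ≠ r) (i : Fin 3) :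
    i = p ∨ i = q ∨ i = r := by
  revert p q r i; decide

lemma three_sum {p q r : Fin 3} (hpq : p ≠ q) (hpr : p ≠ r) (hqr : q ≠ r) (g : Fin 3 → ℕ) :
    ∑ i, g i = g p + g q + g r := by
  have : (Finset.univ : Finset (Fin 3)) = {p, q, r} := by
    revert p q r; decide
  rw [this, Finset.sum_insert (by simp [hpq, hpr]), Finset.sum_insert (by simp [hqr]),
    Finset.sum_singleton, add_assoc]

lemma wedge_lay3 {p q r : Fin 3} (hpq : p ≠ q) (hpr : p ≠ r) (hqr : q ≠ r)
    {Pp : Set (A p).V → Prop} {Pq : Set (A q).V → Prop} {Pr : Set (A r).V → Prop}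
    (hp : HasLay _ Pp) (hq : HasLay _ Pq) (hr : HasLay _ Pr) (m : Fin 3)
    (Q : (∀ i, Set (A i).V) → Prop)
    (h0 : Q (fun _ => ∅))
    (h4 : Q (fun _ => Set.univ))
    (hm : (m = q ∧
      (∀ S, Pp S → ∀ B : ∀ i, Set (A i).V, B p = S \ {x p} → B q = ∅ → B r = ∅ → Q B) ∧
      (∀ S, Pq S → ∀ B : ∀ i, Set (A i).V, B q = S →
        (x q ∈ S → B p = Set.univ ∧ B r = {x r}) →
        (x q ∉ S → B p = {x p}ᶜ ∧ B r = ∅) → Q B) ∧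
      (∀ S, Pr S → ∀ B : ∀ i, Set (A i).V, B p = Set.univ → B q = Set.univ →
        B r = S ∪ {x r} → Q B)) ∨
      (m = r ∧
      (∀ S, Pp S → ∀ B : ∀ i, Set (A i).V, B p = S \ {x p} → B q = ∅ → B r = ∅ → Q B) ∧
      (∀ S, Pq S → ∀ B : ∀ i, Set (A i).V, B p = {x p}ᶜ → B q = S \ {x q} → B r = ∅ → Q B) ∧
      (∀ S, Pr S → ∀ B : ∀ i, Set (A i).V, B r = S →
        (x r ∈ S → B p = Set.univ ∧ B q = Set.univ) →
        (x r ∉ S → B p = {x p}ᶜ ∧ B q = {x q}ᶜ) → Q B))) :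
    HasLay (wedge A x).V (fun S => Q (fun i => winc A x i ⁻¹' S)) := by
  have hcov := three_cover hpq hpr hqr
  have hex : ∀ i, ∃ σ : (A i).V → ℤ, Function.Injective σ ∧
      ∀ t, (∀ h : i = p, Pp (h ▸ {u | σ u ≤ t})) ∧ (∀ h : i = q, Pq (h ▸ {u | σ u ≤ t})) ∧
        (∀ h : i = r, Pr (h ▸ {u | σ u ≤ t})) := by
    intro i
    rcases hcov i with rfl | rfl | rfl
    · obtain ⟨σ, h1, h2⟩ := hp
      exact ⟨σ, h1, fun t => ⟨fun _ => h2 t, fun h => absurd h hpq, fun h => absurd h hpr⟩⟩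
    · obtain ⟨σ, h1, h2⟩ := hq
      exact ⟨σ, h1, fun t => ⟨fun h => absurd h.symm hpq, fun _ => h2 t, fun h => absurd h hqr⟩⟩
    · obtain ⟨σ, h1, h2⟩ := hr
      exact ⟨σ, h1, fun t => ⟨fun h => absurd h.symm hpr, fun h => absurd h.symm hqr,
        fun _ => h2 t⟩⟩
  choose σ hσ hσP using hex
  let pos : Fin 3 → ℕ := fun i => if i = p then 0 else if i = q then 1 else 2
  have hpp : pos p = 0 := by simp [pos]
  have hpq' : pos q = 1 := by simp [pos, hpq.symm]
  have hpr' : pos r = 2 := by simp [pos, hpr.symm, hqr.symm]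
  have hpos : Function.Injective pos := by
    intro i j hij
    rcases hcov i with rfl | rfl | rfl <;> rcases hcov j with rfl | rfl | rfl <;>
      first | rfl | (exfalso; omega)
  have hPp : ∀ t, Pp {u | σ p u ≤ t} := fun t => (hσP p t).1 rfl
  have hPq : ∀ t, Pq {u | σ q u ≤ t} := fun t => (hσP q t).2.1 rfl
  have hPr : ∀ t, Pr {u | σ r u ≤ t} := fun t => (hσP r t).2.2 rfl
  refine wedge_lay A x pos hpos σ hσ m Q h0 ?_
  intro c s B hx hB
  have hBall : ∀ i u, u ∈ B i ↔ (u = x i ∧ (pos m < c ∨ pos m = c ∧ σ m (x m) ≤ s)) ∨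
      (u ≠ x i ∧ (pos i < c ∨ pos i = c ∧ σ i u ≤ s)) := by
    intro i u
    by_cases hu : u = x i
    · subst hu; simp [hx]
    · simp [hB i u hu, hu]
  have hBp := hBall p
  have hBq := hBall q
  have hBr := hBall r
  rw [hpp] at hBp
  rw [hpq'] at hBq
  rw [hpr'] at hBr
  have hc : c = 0 ∨ c = 1 ∨ c = 2 ∨ 3 ≤ c := by omega
  have h4' : 3 ≤ c → Q B := by
    intro hc
    have : B = fun _ => Set.univ := by
      funext i
      ext u
      have h1 : pos i < c := by rcases hcov i with rfl | rfl | rfl <;> omega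
      have h2 : pos m < c := by rcases hcov m with rfl | rfl | rfl <;> omega
      simp only [hBall, h1, h2, true_or, and_true, Set.mem_univ, iff_true]
      exact em _
    rw [this]; exact h4
  rcases hm with ⟨rfl, h1, h2, h3⟩ | ⟨rfl, h1, h2, h3⟩
  · rw [hpq'] at hBp hBq hBr
    rcases hc with rfl | rfl | rfl | hc
    · refine h1 _ (hPp s) B ?_ ?_ ?_ <;> ext u <;> simp [hBp, hBq, hBr, and_comm]
    · refine h2 _ (hPq s) B ?_ ?_ ?_
      · ext u
        simp only [hBq, lt_irrefl, false_or, true_and, Set.mem_ofPred_eq]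
        by_cases hu : u = x m
        · subst hu; simp
        · simp [hu]
      · intro hxs
        have hxs : σ m (x m) ≤ s := hxs
        constructor <;> ext u <;> simp [hBp, hBr, hxs, em]
      · intro hxs
        have hxs : ¬ σ m (x m) ≤ s := hxs
        constructor <;> ext u <;> simp [hBp, hBr, hxs]
    · refine h3 _ (hPr s) B ?_ ?_ ?_
      · ext u; simp [hBp, em]
      · ext u; simp [hBq, em]
      · ext u
        simp only [hBr, Set.mem_union, Set.mem_singleton_iff, Set.mem_ofPred_eq]
        by_cases hu : u = x r <;> simp [hu]
    · exact h4' hc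
  · rw [hpr'] at hBp hBq hBr
    rcases hc with rfl | rfl | rfl | hc
    · refine h1 _ (hPp s) B ?_ ?_ ?_ <;> ext u <;> simp [hBp, hBq, hBr, and_comm]
    · refine h2 _ (hPq s) B ?_ ?_ ?_ <;> ext u <;> simp [hBp, hBq, hBr, and_comm]
    · refine h3 _ (hPr s) B ?_ ?_ ?_
      · ext u
        simp only [hBr, lt_irrefl, false_or, true_and, Set.mem_ofPred_eq]
        by_cases hu : u = x m
        · subst hu; simp
        · simp [hu]
      · intro hxs
        have hxs : σ m (x m) ≤ s := hxs
        constructor <;> ext u <;> simp [hBp, hBq, hxs, em]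
      · intro hxs
        have hxs : ¬ σ m (x m) ≤ s := hxs
        constructor <;> ext u <;> simp [hBp, hBq, hxs]
    · exact h4' hc

end wedge

end Multigraph

namespace Multigraph

section wedgeGood

variable {A : Fin 3 → Multigraph} {x y : ∀ i, (A i).V} {k : ℕ}

lemma Deg1.delta_sdiff {G : Multigraph} {x : G.V} (h : G.Deg1 x) {S : Set G.V}
    (hS : G.delta S ≤ k + 1 ∧ (x ∈ S → S = Set.univ)) : G.delta (S \ {x}) ≤ k + 1 := by
  by_cases hx : x ∈ S
  · have := h.delta_univ_le (S \ {x}) (fun u hu => by simp [hS.2 hx, hu])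
    omega
  · rw [Set.sdiff_singleton_eq_self hx]
    exact hS.1

lemma Deg1.delta_union {G : Multigraph} {x : G.V} (h : G.Deg1 x) {S : Set G.V}
    (hS : G.delta S ≤ k + 1 ∧ (x ∉ S → S = ∅)) : G.delta (S ∪ {x}) ≤ k + 1 := by
  by_cases hx : x ∈ S
  · rw [Set.union_eq_self_of_subset_right (by simpa using hx)]
    exact hS.1
  · have := h.delta_empty_le (S ∪ {x}) (fun u hu => by simp [hS.2 hx, hu])
    omega

lemma Deg1.delta_single {G : Multigraph} {x : G.V} (h : G.Deg1 x) : G.delta {x} ≤ 1 :=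
  h.delta_empty_le _ (fun _ hu => hu)

lemma Deg1.delta_single_compl {G : Multigraph} {x : G.V} (h : G.Deg1 x) : G.delta {x}ᶜ ≤ 1 := by
  rw [delta_compl]; exact h.delta_single

lemma exists_two (q : Fin 3) : ∃ p r : Fin 3, p ≠ q ∧ p ≠ r ∧ q ≠ r := by
  revert q; decide

lemma exists_third (p q : Fin 3) (h : p ≠ q) : ∃ r : Fin 3, p ≠ r ∧ q ≠ r := by
  revert p q; decide

/-- Reducing one part reduces the wedge. -/
lemma wedge_reduce (hA : ∀ i, Good k (A i) (x i) (y i)) (q : Fin 3) (b : Set (A q).V → ℕ)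
    (hq : HasLay _ (fun S => (A q).delta S ≤ k + b S)) :
    HasLay (wedge A x).V
      (fun S => (wedge A x).delta S ≤ k + 1 + b (winc A x q ⁻¹' S)) := by
  obtain ⟨p, r, hpq, hpr, hqr⟩ := exists_two q
  simp only [wedge_delta]
  refine wedge_lay3 A x hpq hpr hqr (hA p).lastx hq (hA r).firstx q
    (fun B => ∑ i, (A i).delta (B i) ≤ k + 1 + b (B q)) ?_ ?_ (Or.inl ⟨rfl, ?_, ?_, ?_⟩)
  · simp [delta_empty]
  · simp [delta_univ]
  · intro S hS B h1 h2 h3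
    rw [three_sum hpq hpr hqr, h1, h2, h3, delta_empty, delta_empty]
    have := (hA p).degx.delta_sdiff hS
    omega
  · intro S hS B h1 h2 h3
    rw [three_sum hpq hpr hqr, h1]
    by_cases hx : x q ∈ S
    · obtain ⟨h2, h3⟩ := h2 hx
      rw [h2, h3, delta_univ]
      have := (hA r).degx.delta_single
      omega
    · obtain ⟨h2, h3⟩ := h3 hx
      rw [h2, h3, delta_empty]
      have := (hA p).degx.delta_single_compl
      omega
  · intro S hS B h1 h2 h3
    rw [three_sum hpq hpr hqr, h1, h2, h3, delta_univ, delta_univ]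
    have := (hA r).degx.delta_union hS
    omega

lemma wedge_last (hA : ∀ i, Good k (A i) (x i) (y i)) (r : Fin 3) :
    HasLay (wedge A x).V
      (fun S => (wedge A x).delta S ≤ k + 1 + 1 ∧ (winc A x r (y r) ∈ S → S = Set.univ)) := by
  obtain ⟨p, q, hpr, hpq, hqr⟩ := exists_two r
  replace hqr := hqr.symm
  have hcov := three_cover hpq hpr hqr
  simp only [wedge_delta]
  have hyx := (hA r).ne.symm
  have : HasLay (wedge A x).V
      (fun S => (fun B : ∀ i, Set (A i).V =>
        ∑ i, (A i).delta (B i) ≤ k + 1 + 1 ∧ (y r ∈ B r → ∀ i, B i = Set.univ))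
          (fun i => winc A x i ⁻¹' S)) := by
    refine wedge_lay3 A x hpq hpr hqr (hA p).lastx (hA q).lastx (hA r).lasty q
      (fun B : ∀ i, Set (A i).V =>
        ∑ i, (A i).delta (B i) ≤ k + 1 + 1 ∧ (y r ∈ B r → ∀ i, B i = Set.univ))
      ?_ ?_ (Or.inl ⟨rfl, ?_, ?_, ?_⟩)
    · simp [delta_empty]
    · simp [delta_univ]
    · intro S hS B h1 h2 h3
      refine ⟨?_, fun h => by simp [h3] at h⟩
      rw [three_sum hpq hpr hqr, h1, h2, h3, delta_empty, delta_empty]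
      have := (hA p).degx.delta_sdiff hS
      omega
    · intro S hS B h1 h2 h3
      rw [three_sum hpq hpr hqr, h1]
      have hS1 := hS.1
      by_cases hx : x q ∈ S
      · obtain ⟨h2, h3⟩ := h2 hx
        rw [h2, h3, delta_univ]
        have := (hA r).degx.delta_single
        refine ⟨by omega, fun h => absurd h hyx⟩
      · obtain ⟨h2, h3⟩ := h3 hx
        rw [h2, h3, delta_empty]
        have := (hA p).degx.delta_single_compl
        refine ⟨by omega, fun h => by simp at h⟩
    · intro S hS B h1 h2 h3
      rw [three_sum hpq hpr hqr, h1, h2, h3, delta_univ, delta_univ]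
      have := (hA r).degx.delta_le (S ∪ {x r}) S (fun u hu => by simp [hu])
      have hS1 := hS.1
      refine ⟨by omega, fun h i => ?_⟩
      have h5 : S = Set.univ := hS.2 (by simpa [hyx] using h)
      rcases hcov i with rfl | rfl | rfl
      · exact h1
      · exact h2
      · rw [h3, h5]; simp
  refine this.mono ?_
  rintro S ⟨h1, h2⟩
  refine ⟨h1, fun h => ?_⟩
  have h3 := h2 h
  ext w
  obtain ⟨i, v, rfl⟩ := winc_surj A x w
  have h4 : winc A x i ⁻¹' S = Set.univ := h3 i
  have : v ∈ winc A x i ⁻¹' S := by rw [h4]; trivial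
  exact ⟨fun _ => trivial, fun _ => this⟩

lemma wedge_lift_cross (hA : ∀ i, Good k (A i) (x i) (y i)) {p q : Fin 3} (hpq : p ≠ q)
    (e : (A p).E) (f : (A q).E) (he : (A p).Inc e (x p)) (hf : (A q).Inc f (x q)) :
    HasLay (wedge A x).V
      (fun S => (wedge A x).delta S ≤ k + 1 + (wedge A x).b2 ⟨p, e⟩ ⟨q, f⟩ S) := by
  classical
  obtain ⟨r, hpr, hqr⟩ := exists_third p q hpq
  have hcr : ∀ (i : Fin 3) (g : (A i).E), (A i).Inc g (x i) → (A i).Cross {x i}ᶜ g := by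
    intro i g hg
    have hl := (A i).loopless g
    unfold Cross
    rcases hg with hg | hg
    · rw [hg] at hl ⊢
      simp [hl.symm]
    · rw [hg] at hl ⊢
      simp [hl]
  simp only [wedge_delta, b2, wedge_cross]
  refine wedge_lay3 A x hpq hpr hqr (hA p).lastx (hA q).firstx (hA r).lastx r
    (fun B => ∑ i, (A i).delta (B i) ≤
      k + 1 + if (A p).Cross (B p) e ∧ (A q).Cross (B q) f then 2 else 0)
    ?_ ?_ (Or.inr ⟨rfl, ?_, ?_, ?_⟩)
  · simp [delta_empty]
  · simp [delta_univ]
  · intro S hS B h1 h2 h3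
    rw [three_sum hpq hpr hqr, h1, h2, h3, delta_empty, delta_empty]
    have := (hA p).degx.delta_sdiff hS
    omega
  · intro S hS B h1 h2 h3
    rw [three_sum hpq hpr hqr, h1, h2, h3, delta_empty]
    have h4 := (hA p).degx.delta_single_compl
    have h5 := hcr p e he
    by_cases hc : (A q).Cross (S \ {x q}) f
    · rw [if_pos ⟨h5, hc⟩]
      have := (hA q).degx.delta_le (S \ {x q}) S (fun u hu => by simp [hu])
      have := hS.1
      omega
    · by_cases hx : x q ∈ S
      · have := (hA q).degx.delta_succ_le (S \ {x q}) S (fun u hu => by simp [hu])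
          (by simp [hx]) f hf hc
        have := hS.1
        omega
      · rw [hS.2 hx, Set.empty_sdiff, delta_empty]
        omega
  · intro S hS B h1 h2 h3
    rw [three_sum hpq hpr hqr, h1]
    have hS1 := hS.1
    by_cases hx : x r ∈ S
    · obtain ⟨h2, h3⟩ := h2 hx
      rw [h2, h3, delta_univ, delta_univ]
      omega
    · obtain ⟨h2, h3⟩ := h3 hx
      rw [h2, h3, if_pos ⟨hcr p e he, hcr q f hf⟩]
      have := (hA p).degx.delta_single_compl
      have := (hA q).degx.delta_single_compl
      omega

lemma wedge_lower (hA : ∀ i, Good k (A i) (x i) (y i)) (ρ : (wedge A x).V → ℤ)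
    (hρ : Function.Injective ρ) : ∃ t, k + 1 + 1 ≤ (wedge A x).delta {u | ρ u ≤ t} := by
  by_contra hcon
  push Not at hcon
  have hex : ∀ i, ∃ t, k + 1 ≤ (A i).delta {u | ρ (winc A x i u) ≤ t} := fun i =>
    (hA i).lower (fun u => ρ (winc A x i u)) (hρ.comp (winc_inj A x i))
  choose t ht using hex
  have hzero : ∀ i j, i ≠ j → (A j).delta {u | ρ (winc A x j u) ≤ t i} = 0 := by
    intro i j hij
    have h1 := hcon (t i)
    rw [wedge_delta] at h1
    obtain ⟨l, hil, hjl⟩ := exists_third i j hij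
    rw [three_sum hij hil hjl] at h1
    have h2 := ht i
    have h3 : (A i).delta {u | ρ (winc A x i u) ≤ t i} + (A j).delta {u | ρ (winc A x j u) ≤ t i}
      + (A l).delta {u | ρ (winc A x l u) ≤ t i} < k + 1 + 1 := h1
    omega
  -- strict separation in the part itself
  have hlow : ∀ i, ∃ u, ρ (winc A x i u) ≤ t i := by
    intro i
    by_contra hc
    push Not at hc
    have : {u | ρ (winc A x i u) ≤ t i} = ∅ := by
      ext u; simpa using hc u
    have h := ht i
    rw [this, delta_empty] at h
    omega
  have hhigh : ∀ i, ∃ u, t i < ρ (winc A x i u) := by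
    intro i
    by_contra hc
    push Not at hc
    have : {u | ρ (winc A x i u) ≤ t i} = Set.univ := by
      ext u; simpa using hc u
    have h := ht i
    rw [this, delta_univ] at h
    omega
  have hA1 : ∀ i j, i ≠ j → ρ none ≤ t i → ∀ u, ρ (winc A x j u) ≤ t i := by
    intro i j hij hv u
    rcases (hA j).conn _ (hzero i j hij) with h | h
    · have : x j ∈ {u | ρ (winc A x j u) ≤ t i} := by
        change ρ (winc A x j (x j)) ≤ t i
        rw [winc_root]; exact hv
      rw [h] at this
      exact this.elim
    · have : u ∈ {u | ρ (winc A x j u) ≤ t i} := by rw [h]; trivial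
      exact this
  have hA2 : ∀ i j, i ≠ j → ¬ ρ none ≤ t i → ∀ u, t i < ρ (winc A x j u) := by
    intro i j hij hv u
    rcases (hA j).conn _ (hzero i j hij) with h | h
    · by_contra hc
      have : u ∈ {u | ρ (winc A x j u) ≤ t i} := not_lt.mp hc
      rw [h] at this
      exact this.elim
    · exfalso
      have : x j ∈ {u | ρ (winc A x j u) ≤ t i} := by rw [h]; trivial
      change ρ (winc A x j (x j)) ≤ t i at this
      rw [winc_root] at this
      exact hv this
  have hP1 : ∀ i j, i ≠ j → ρ none ≤ t i → ρ none ≤ t j → False := by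
    intro i j hij hi hj
    obtain ⟨u, hu⟩ := hhigh i
    obtain ⟨u', hu'⟩ := hhigh j
    have := hA1 i j hij hi u'
    have := hA1 j i hij.symm hj u
    omega
  have hP2 : ∀ i j, i ≠ j → ¬ ρ none ≤ t i → ¬ ρ none ≤ t j → False := by
    intro i j hij hi hj
    obtain ⟨u, hu⟩ := hlow i
    obtain ⟨u', hu'⟩ := hlow j
    have := hA2 i j hij hi u'
    have := hA2 j i hij.symm hj u
    omega
  have a1 := hP1 0 1 (by decide)
  have a2 := hP1 0 2 (by decide)
  have a3 := hP1 1 2 (by decide)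
  have a4 := hP2 0 1 (by decide)
  have a5 := hP2 0 2 (by decide)
  have a6 := hP2 1 2 (by decide)
  tauto

lemma wedge_inc {i : Fin 3} {e : (A i).E} {j : Fin 3} {v : (A j).V}
    (h : (wedge A x).Inc ⟨i, e⟩ (winc A x j v)) :
    ∃ u, (A i).Inc e u ∧ winc A x i u = winc A x j v := by
  rcases h with h | h
  · exact ⟨_, Or.inl rfl, h⟩
  · exact ⟨_, Or.inr rfl, h⟩

lemma wedge_deg (hA : ∀ i, Good k (A i) (x i) (y i)) (j : Fin 3) :
    (wedge A x).Deg1 (winc A x j (y j)) := by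
  rintro ⟨i, e⟩ ⟨i', e'⟩ h h'
  obtain ⟨u, hu, hw⟩ := wedge_inc h
  obtain ⟨u', hu', hw'⟩ := wedge_inc h'
  have hi : i = j := by
    by_contra hij
    exact (hA j).ne (winc_eq_ne A x hij hw).2.symm
  have hi' : i' = j := by
    by_contra hij
    exact (hA j).ne (winc_eq_ne A x hij hw').2.symm
  subst hi
  subst hi'
  have h1 := winc_inj A x _ hw
  have h2 := winc_inj A x _ hw'
  subst h1
  subst h2
  rw [(hA _).degy e e' hu hu']

/-- The wedge of three good graphs is good, one level higher. -/
theorem wedge_good (hA : ∀ i, Good k (A i) (x i) (y i)) :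
    Good (k + 1) (wedge A x) (winc A x 0 (y 0)) (winc A x 1 (y 1)) where
  lower := wedge_lower hA
  conn := by
    intro S hS
    rw [wedge_delta] at hS
    have h0 : ∀ i, (A i).delta (winc A x i ⁻¹' S) = 0 := by
      intro i
      exact (Finset.sum_eq_zero_iff.mp hS) i (Finset.mem_univ i)
    by_cases hv : (none : WV A x) ∈ S
    · right
      ext w
      obtain ⟨i, v, rfl⟩ := winc_surj A x w
      rcases (hA i).conn _ (h0 i) with h | h
      · have : x i ∈ winc A x i ⁻¹' S := by
          change winc A x i (x i) ∈ S
          rw [winc_root]; exact hv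
        rw [h] at this
        exact this.elim
      · have : v ∈ winc A x i ⁻¹' S := by rw [h]; trivial
        exact ⟨fun _ => trivial, fun _ => this⟩
    · left
      ext w
      obtain ⟨i, v, rfl⟩ := winc_surj A x w
      rcases (hA i).conn _ (h0 i) with h | h
      · have : v ∉ winc A x i ⁻¹' S := by rw [h]; exact fun h => h
        exact ⟨fun h' => this h', fun h' => h'.elim⟩
      · have : x i ∈ winc A x i ⁻¹' S := by rw [h]; trivial
        change winc A x i (x i) ∈ S at this
        rw [winc_root] at this
        exact absurd this hv
  del := by
    rintro ⟨i, e⟩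
    exact wedge_reduce hA i _ ((hA i).del e)
  lift := by
    rintro ⟨i, e⟩ ⟨j, f⟩ hne ⟨b, hb, hb'⟩
    obtain ⟨l, v, rfl⟩ := winc_surj A x b
    obtain ⟨u, hu, hw⟩ := wedge_inc hb
    obtain ⟨u', hu', hw'⟩ := wedge_inc hb'
    by_cases hij : i = j
    · subst hij
      have : u = u' := winc_inj A x i (hw.trans hw'.symm)
      subst this
      refine wedge_reduce hA i _ ((hA i).lift e f ?_ ⟨u, hu, hu'⟩)
      rintro rfl
      exact hne rfl
    · obtain ⟨h1, h2⟩ := winc_eq_ne A x hij (hw.trans hw'.symm)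
      subst h1
      subst h2
      exact wedge_lift_cross hA hij e f hu hu'
  ne := by
    intro h
    exact (hA 0).ne (winc_eq_ne A x (by decide) h).1.symm
  degx := wedge_deg hA 0
  degy := wedge_deg hA 1
  lastx := wedge_last hA 0
  lasty := wedge_last hA 1

lemma wedge_card : Nat.card (wedge A x).E = ∑ i, Nat.card (A i).E :=
  Nat.card_sigma

end wedgeGood

end Multigraph

namespace Multigraph

/-! ### Base graphs -/

/-- A single edge. -/
abbrev edgeGraph : Multigraph where
  V := Fin 2
  E := Fin 1
  finV := inferInstance
  finE := inferInstance
  ends _ := (0, 1)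
  loopless _ := by simp

lemma edge_good : Good 0 edgeGraph (0 : Fin 2) (1 : Fin 2) := by
  have hE : ∀ e f : edgeGraph.E, e = f := fun e f => Subsingleton.elim (α := Fin 1) e f
  have h1 : ∀ S, edgeGraph.delta S ≤ 1 := by
    intro S
    refine (Set.ncard_le_card _).trans ?_
    change Nat.card (Fin 1) ≤ 1
    simp
  have hex : ∀ e, HasLay edgeGraph.V (fun S => edgeGraph.delta S ≤ 0 + edgeGraph.b1 e S) := by
    intro e
    refine ⟨fun v : Fin 2 => (v.val : ℤ), fun u v h => ?_, fun t => ?_⟩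
    · exact Fin.ext (by simpa using h)
    · change edgeGraph.delta _ ≤ 0 + edgeGraph.b1 e _
      unfold b1
      split_ifs with hc
      · exact h1 _
      · rw [Nat.le_zero]
        refine (Set.ncard_eq_zero (Set.toFinite _)).mpr ?_
        ext f
        rw [hE f e]
        exact ⟨fun h => hc h, fun h => h.elim⟩
  refine ⟨?_, ?_, hex, fun e f hef _ => absurd (hE e f) hef, by decide, fun e f _ _ => hE e f,
    fun e f _ _ => hE e f, ?_, ?_⟩
  · intro ρ hρ
    refine ⟨min (ρ (0 : Fin 2)) (ρ (1 : Fin 2)), ?_⟩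
    have hne : ρ (0 : Fin 2) ≠ ρ (1 : Fin 2) := fun h => absurd (hρ h) (by decide)
    rw [Nat.succ_le_iff]
    apply (Set.ncard_pos).mpr
    refine ⟨(0 : Fin 1), ?_⟩
    change ¬ (ρ (0 : Fin 2) ≤ _ ↔ ρ (1 : Fin 2) ≤ _)
    omega
  · intro S hS
    have h2 : (0 : Fin 2) ∈ S ↔ (1 : Fin 2) ∈ S := by
      have := (Set.ncard_eq_zero).mp hS
      by_contra hc
      have h3 : (0 : Fin 1) ∈ {e : edgeGraph.E | edgeGraph.Cross S e} := hc
      rw [delta_eq] at hS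
      rw [(Set.ncard_eq_zero).mp hS] at h3
      exact h3
    by_cases h0 : (0 : Fin 2) ∈ S
    · right
      ext v
      refine ⟨fun _ => trivial, fun _ => ?_⟩
      have : ∀ v : Fin 2, v = 0 ∨ v = 1 := by decide
      rcases this v with rfl | rfl
      · exact h0
      · exact h2.mp h0
    · left
      ext v
      refine ⟨fun hv => ?_, fun h => h.elim⟩
      have : ∀ v : Fin 2, v = 0 ∨ v = 1 := by decide
      rcases this v with rfl | rfl
      · exact h0 hv
      · exact h0 (h2.mpr hv)
  · refine ⟨fun v : Fin 2 => -(v.val : ℤ), fun u v h => ?_, fun t => ⟨h1 _, ?_⟩⟩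
    · exact Fin.ext (by simpa using h)
    · intro (h : -(((0 : Fin 2).val : ℕ) : ℤ) ≤ t)
      ext v
      refine ⟨fun _ => trivial, fun _ => ?_⟩
      change -(v.val : ℤ) ≤ t
      simp at h
      omega
  · refine ⟨fun v : Fin 2 => (v.val : ℤ), fun u v h => ?_, fun t => ⟨h1 _, ?_⟩⟩
    · exact Fin.ext (by simpa using h)
    · intro (h : (((1 : Fin 2).val : ℕ) : ℤ) ≤ t)
      ext v
      refine ⟨fun _ => trivial, fun _ => ?_⟩
      change (v.val : ℤ) ≤ t
      have := Fin.is_lt (n := 2) v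
      simp at h
      omega

/-- The star with five leaves. -/
abbrev starGraph : Multigraph where
  V := Fin 6
  E := Fin 5
  finV := inferInstance
  finE := inferInstance
  ends e := (0, e.succ)
  loopless e := (Fin.succ_ne_zero e).symm

/-- Size of a cut in the star. -/
def starCut (p : Fin 6 → Bool) : ℕ := (Finset.univ.filter (fun e : Fin 5 => p 0 ≠ p e.succ)).card

lemma star_cross (ρ : Fin 6 → ℕ) (v : Fin 6) (e : Fin 5) :
    starGraph.Cross {u : Fin 6 | ρ u ≤ ρ v} e ↔
      decide (ρ 0 ≤ ρ v) ≠ decide (ρ e.succ ≤ ρ v) := by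
  change ¬ (ρ 0 ≤ ρ v ↔ ρ e.succ ≤ ρ v) ↔ _
  rw [ne_eq, decide_eq_decide]

lemma star_delta (ρ : Fin 6 → ℕ) (v : Fin 6) :
    starGraph.delta {u : Fin 6 | ρ u ≤ ρ v} = starCut (fun u => decide (ρ u ≤ ρ v)) := by
  unfold starCut
  rw [← Set.ncard_coe_finset, delta_eq]
  congr 1
  ext e
  change starGraph.Cross {u : Fin 6 | ρ u ≤ ρ v} e ↔ _
  rw [star_cross]
  simp

/-- Ordering of the star with the leaf of `e` last. -/
def ord1 (e : Fin 5) (u : Fin 6) : ℕ :=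
  if u = e.succ then 20 else if u = 0 then (if e.succ.val ≤ 2 then 7 else 5) else 2 * u.val

/-- Ordering of the star with the leaves of `e` and `f` last. -/
def ord2 (e f : Fin 5) (u : Fin 6) : ℕ :=
  if u = e.succ then 20 else if u = f.succ then 19 else
    if u = 0 then
      (if e.succ.val ≠ 1 ∧ f.succ.val ≠ 1 then 3 else
        if e.succ.val ≠ 2 ∧ f.succ.val ≠ 2 then 5 else 7)
    else 2 * u.val

lemma ord1_inj : ∀ e, Function.Injective (ord1 e) := by decide

lemma ord2_inj : ∀ e f, e ≠ f → Function.Injective (ord2 e f) := by decide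

lemma ord1_cut : ∀ e v, starCut (fun u => decide (ord1 e u ≤ ord1 e v)) ≤ 2 ∨
    (decide (ord1 e 0 ≤ ord1 e v) ≠ decide (ord1 e e.succ ≤ ord1 e v) ∧
      starCut (fun u => decide (ord1 e u ≤ ord1 e v)) ≤ 3) := by decide

lemma ord1_last : ∀ e v, ord1 e v ≤ ord1 e e.succ := by decide

lemma ord2_cut : ∀ e f v, e ≠ f → starCut (fun u => decide (ord2 e f u ≤ ord2 e f v)) ≤ 2 ∨
    (decide (ord2 e f 0 ≤ ord2 e f v) ≠ decide (ord2 e f e.succ ≤ ord2 e f v) ∧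
     decide (ord2 e f 0 ≤ ord2 e f v) ≠ decide (ord2 e f f.succ ≤ ord2 e f v) ∧
      starCut (fun u => decide (ord2 e f u ≤ ord2 e f v)) ≤ 4) := by decide

lemma star_last (e : Fin 5) : HasLay starGraph.V
    (fun S => starGraph.delta S ≤ 2 + 1 ∧ ((e.succ : Fin 6) ∈ S → S = Set.univ)) := by
  refine hasLay_of (V := Fin 6) (ord1 e) (ord1_inj e) ⟨by rw [delta_empty]; omega,
    fun h => h.elim⟩ ?_
  intro v
  refine ⟨?_, ?_⟩
  · rw [star_delta]
    rcases ord1_cut e v with h | h <;> omega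
  · intro (h : ord1 e e.succ ≤ ord1 e v)
    ext u
    exact ⟨fun _ => trivial, fun _ => (ord1_last e u).trans h⟩

lemma star_deg (e : Fin 5) : starGraph.Deg1 (e.succ : Fin 6) := by
  have : ∀ f : Fin 5, starGraph.Inc f (e.succ : Fin 6) → f = e := by
    rintro f (h | h)
    · exact absurd (h : (0 : Fin 6) = e.succ) (Fin.succ_ne_zero e).symm
    · exact Fin.succ_injective _ h
  intro f f' h h'
  rw [this f h, this f' h']

lemma star_good : Good 2 starGraph ((0 : Fin 5).succ : Fin 6) ((1 : Fin 5).succ : Fin 6) := by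
  refine ⟨?_, ?_, ?_, ?_, by decide, star_deg 0, star_deg 1, star_last 0, star_last 1⟩
  · intro ρ hρ
    by_contra hcon
    push Not at hcon
    have h1 := hcon (ρ (0 : Fin 6))
    have h2 := hcon (ρ (0 : Fin 6) - 1)
    rw [delta_eq] at h1 h2
    have h3 := Set.ncard_union_le {e | starGraph.Cross {u | ρ u ≤ ρ (0 : Fin 6)} e}
      {e | starGraph.Cross {u | ρ u ≤ ρ (0 : Fin 6) - 1} e}
    have h4 : {e | starGraph.Cross {u | ρ u ≤ ρ (0 : Fin 6)} e} ∪
      {e | starGraph.Cross {u | ρ u ≤ ρ (0 : Fin 6) - 1} e} = Set.univ := by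
      ext e
      refine ⟨fun _ => trivial, fun _ => ?_⟩
      change (¬ (ρ (0 : Fin 6) ≤ ρ (0 : Fin 6) ↔ ρ (Fin.succ e : Fin 6) ≤ ρ (0 : Fin 6))) ∨
        (¬ (ρ (0 : Fin 6) ≤ ρ (0 : Fin 6) - 1 ↔ ρ (Fin.succ e : Fin 6) ≤ ρ (0 : Fin 6) - 1))
      have : ρ (Fin.succ e : Fin 6) ≠ ρ (0 : Fin 6) := fun h => Fin.succ_ne_zero e (hρ h)
      omega
    rw [h4, Set.ncard_univ] at h3
    have h5 : Nat.card starGraph.E = 5 := by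
      change Nat.card (Fin 5) = 5
      simp
    omega
  · intro S hS
    rw [delta_eq] at hS
    have h1 := (Set.ncard_eq_zero).mp hS
    have h2 : ∀ e : Fin 5, (0 : Fin 6) ∈ S ↔ (e.succ : Fin 6) ∈ S := by
      intro e
      by_contra hc
      have h3 : (e : Fin 5) ∈ {e : starGraph.E | starGraph.Cross S e} := hc
      rw [h1] at h3
      exact h3
    by_cases h0 : (0 : Fin 6) ∈ S
    · right
      ext v
      refine ⟨fun _ => trivial, fun _ => ?_⟩
      rcases Fin.eq_zero_or_eq_succ (n := 5) v with rfl | ⟨e, rfl⟩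
      · exact h0
      · exact (h2 e).mp h0
    · left
      ext v
      refine ⟨fun hv => ?_, fun h => h.elim⟩
      rcases Fin.eq_zero_or_eq_succ (n := 5) v with rfl | ⟨e, rfl⟩
      · exact h0 hv
      · exact h0 ((h2 e).mpr hv)
  · intro e
    refine hasLay_of (V := Fin 6) (ord1 e) (ord1_inj e) (by rw [delta_empty]; omega) ?_
    intro v
    unfold b1
    rw [star_delta]
    rcases ord1_cut e v with h | ⟨h, h'⟩
    · omega
    · rw [if_pos ((star_cross _ _ _).mpr h)]
      exact h'
  · intro e f hef _
    refine hasLay_of (V := Fin 6) (ord2 e f) (ord2_inj e f hef) (by rw [delta_empty]; omega) ?_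
    intro v
    unfold b2
    rw [star_delta]
    rcases ord2_cut e f v hef with h | ⟨h, h', h''⟩
    · omega
    · rw [if_pos ⟨(star_cross _ _ _).mpr h, (star_cross _ _ _).mpr h'⟩]
      exact h''

/-- Wedging three good graphs, existential form. -/
lemma exists_wedge {k : ℕ} (n : Fin 3 → ℕ)
    (h : ∀ i, ∃ (G : Multigraph) (x y : G.V), Good k G x y ∧ Nat.card G.E = n i) :
    ∃ (G : Multigraph) (x y : G.V), Good (k + 1) G x y ∧ Nat.card G.E = n 0 + n 1 + n 2 := by
  choose A x y hA hn using h
  refine ⟨wedge A x, _, _, wedge_good hA, ?_⟩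
  rw [wedge_card, Fin.sum_univ_three, hn, hn, hn]

lemma exists_good (j : ℕ) : ∀ a b : ℕ, a + b = 3 ^ j →
    ∃ (G : Multigraph) (x y : G.V), Good (2 + j) G x y ∧ Nat.card G.E = 9 * a + 5 * b := by
  induction j with
  | zero =>
    intro a b hab
    have : (a = 1 ∧ b = 0) ∨ (a = 0 ∧ b = 1) := by simp at hab; omega
    rcases this with ⟨rfl, rfl⟩ | ⟨rfl, rfl⟩
    · have h1 := exists_wedge (k := 0) (fun _ => 1) (fun _ => ⟨edgeGraph, _, _, edge_good, by
        change Nat.card (Fin 1) = 1; simp⟩)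
      exact exists_wedge (k := 1) (fun _ => 3) (fun _ => h1)
    · exact ⟨starGraph, _, _, star_good, by change Nat.card (Fin 5) = _; simp⟩
  | succ j ih =>
    intro a b hab
    rw [pow_succ] at hab
    generalize 3 ^ j = N at *
    obtain ⟨a0, a1, a2, b0, b1, b2, h0, h1, h2, ha, hb⟩ : ∃ a0 a1 a2 b0 b1 b2,
        a0 + b0 = N ∧ a1 + b1 = N ∧ a2 + b2 = N ∧ a = a0 + a1 + a2 ∧ b = b0 + b1 + b2 := by
      refine ⟨min a N, min (a - N) N, a - N - N, N - min a N, N - min (a - N) N,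
        N - (a - N - N), ?_⟩
      omega
    obtain ⟨G, x, y, hG, hc⟩ := exists_wedge (k := 2 + j)
      ![9 * a0 + 5 * b0, 9 * a1 + 5 * b1, 9 * a2 + 5 * b2] (by
        intro i
        fin_cases i
        · exact ih _ _ h0
        · exact ih _ _ h1
        · exact ih _ _ h2)
    refine ⟨G, x, y, hG, ?_⟩
    rw [hc]
    simp
    omega

end Multigraph

namespace Multigraph

/-! ### Disjoint unions -/

lemma sigma_cross {m : ℕ} {Gs : Fin m → Multigraph} (S : Set (sigmaUnion Gs).V) (i : Fin m)
    (g : (Gs i).E) :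
    (sigmaUnion Gs).Cross S ⟨i, g⟩ ↔ (Gs i).Cross {u | (⟨i, u⟩ : Σ i, (Gs i).V) ∈ S} g := Iff.rfl

/-- The disjoint union of `w + 1` good graphs needs more than `w` deletions. -/
lemma union_lower {k w : ℕ} (Gs : Fin (w + 1) → Multigraph) (x y : ∀ i, (Gs i).V)
    (hG : ∀ i, Good k (Gs i) (x i) (y i)) : ¬ dcw k (sigmaUnion Gs) ≤ w := by
  intro hle
  have hne : {w | ∃ F : Set (sigmaUnion Gs).E,
      ((sigmaUnion Gs).deleteEdges F).cutwidth ≤ k ∧ F.ncard = w}.Nonempty := by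
    refine ⟨_, Set.univ, ?_, rfl⟩
    apply cutwidth_le
    obtain ⟨n, ⟨f⟩⟩ := Finite.exists_equiv_fin (sigmaUnion Gs).V
    refine ⟨fun v => ((f v).val : ℤ), fun u v h => ?_, fun t => ?_⟩
    · exact f.injective (Fin.ext (by simpa using h))
    · change ((sigmaUnion Gs).deleteEdges Set.univ).delta _ ≤ k
      refine (Set.ncard_le_card _).trans ?_
      have : IsEmpty ((sigmaUnion Gs).deleteEdges Set.univ).E := ⟨fun e => e.2 trivial⟩
      simp
  obtain ⟨F, hF, hFc⟩ := Nat.sInf_mem hne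
  have hFw : F.ncard ≤ w := hFc.le.trans hle
  obtain ⟨ρ, hρ, hd⟩ := exists_of_cutwidth_le hF
  obtain ⟨i, hi⟩ : ∃ i : Fin (w + 1), ∀ e ∈ F, e.1 ≠ i := by
    by_contra hc
    push Not at hc
    have h1 : (Set.univ : Set (Fin (w + 1))) ⊆ Sigma.fst '' F := by
      intro i _
      obtain ⟨e, he, hei⟩ := hc i
      exact ⟨e, he, hei⟩
    have h2 := Set.ncard_le_ncard h1 (Set.toFinite _)
    have h3 := Set.ncard_image_le (f := Sigma.fst) (Set.toFinite F)
    rw [Set.ncard_univ, Nat.card_eq_fintype_card, Fintype.card_fin] at h2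
    have h4 : (Sigma.fst '' F).ncard ≤ w := h3.trans hFw
    omega
  obtain ⟨t, ht⟩ := (hG i).lower (fun u => ρ (⟨i, u⟩ : Σ i, (Gs i).V))
    (fun u v h => eq_of_heq (Sigma.mk.inj (hρ h)).2)
  have h5 : ((sigmaUnion Gs).deleteEdges F).delta {u | ρ u ≤ t} ≤ k := hd t
  have h6 : (Gs i).delta {u | ρ (⟨i, u⟩ : Σ i, (Gs i).V) ≤ t} ≤
      ((sigmaUnion Gs).deleteEdges F).delta {u | ρ u ≤ t} := by
    refine Set.ncard_le_ncard_of_injOn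
      (fun e => (⟨⟨i, e⟩, fun h => hi _ h rfl⟩ : {e : (sigmaUnion Gs).E // e ∉ F})) ?_ ?_
      (Set.toFinite _)
    · intro e he
      exact he
    · intro e _ e' _ h
      exact eq_of_heq (Sigma.mk.inj (Subtype.mk.inj h)).2
  omega

/-- Counting surviving edges through an immersion model. -/
lemma count_le {H G : Multigraph} (M : ImmersionModel H G) (F : Set H.E) (S : Set G.V)
    (R : Set G.E) (hR : ∀ h, h ∉ F → H.Cross (M.vmap ⁻¹' S) h → ∃ g ∈ (M.emap h).edges, g ∈ R) :
    (H.deleteEdges F).delta (M.vmap ⁻¹' S) ≤ R.ncard := by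
  classical
  have h1 : ∀ h : {e : H.E // e ∉ F}, ∃ g, H.Cross (M.vmap ⁻¹' S) h.1 →
      g ∈ (M.emap h.1).edges ∧ g ∈ R := by
    intro h
    by_cases hc : H.Cross (M.vmap ⁻¹' S) h.1
    · obtain ⟨g, hg, hg'⟩ := hR h.1 h.2 hc
      exact ⟨g, fun _ => ⟨hg, hg'⟩⟩
    · obtain ⟨g⟩ : Nonempty G.E := by
        by_contra hne
        rw [not_nonempty_iff] at hne
        have : ∀ {u v : G.V} (p : G.Walk u v), u = v := by
          intro u v p
          cases p with
          | nil => rfl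
          | cons e h p => exact hne.elim e
        exact H.loopless h.1 (M.inj (this (M.emap h.1)))
      exact ⟨g, fun h => absurd h hc⟩
  choose γ hγ using h1
  refine Set.ncard_le_ncard_of_injOn γ (fun h hh => (hγ h hh).2) ?_ (Set.toFinite _)
  intro h hh h' hh' heq
  by_contra hne
  exact M.edgeDisj h.1 h'.1 (fun hc => hne (Subtype.ext hc)) _ (hγ h hh).1
    (heq ▸ (hγ h' hh').1)

lemma core {k m : ℕ} {Gs : Fin m → Multigraph} {H : Multigraph}
    (M : ImmersionModel H (sigmaUnion Gs)) (F : Set H.E)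
    (L : ∀ i, Set (Gs i).V → Set (Gs i).E)
    (hL : ∀ i, HasLay (Gs i).V (fun S => (L i S).ncard ≤ k))
    (hc : ∀ (S : Set (sigmaUnion Gs).V) (j : Fin m), 
      (∀ g, (sigmaUnion Gs).Cross S g → g.1 = j) → ∀ h, h ∉ F → H.Cross (M.vmap ⁻¹' S) h →
      ∃ g : (Gs j).E, (⟨j, g⟩ : Σ i, (Gs i).E) ∈ (M.emap h).edges ∧
        g ∈ L j {u | (⟨j, u⟩ : Σ i, (Gs i).V) ∈ S}) :
    dcw k H ≤ F.ncard := by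
  choose ρ hρ hd using hL
  refine Nat.sInf_le ⟨F, ?_, rfl⟩
  apply cutwidth_le
  let f : (sigmaUnion Gs).V → Fin m ×ₗ ℤ := fun p => toLex (p.1, ρ p.1 p.2)
  have hf : Function.Injective f := by
    rintro ⟨i, u⟩ ⟨j, v⟩ h
    have h' : ((i, ρ i u) : Fin m × ℤ) = (j, ρ j v) := toLex.injective h
    rw [Prod.mk.injEq] at h'
    obtain ⟨rfl, h2⟩ := h'
    rw [hρ i h2]
  refine hasLay_of (V := H.V) (fun v => f (M.vmap v)) (hf.comp M.inj) ?_ ?_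
  · exact (delta_empty (H.deleteEdges F)).le.trans (Nat.zero_le _)
  intro v
  set q := M.vmap v with hq
  let S : Set (sigmaUnion Gs).V := {p | f p ≤ f q}
  have hS : ∀ i u, (⟨i, u⟩ : Σ i, (Gs i).V) ∈ S ↔ i < q.1 ∨ i = q.1 ∧ ρ i u ≤ ρ q.1 q.2 := by
    intro i u
    exact Prod.Lex.le_iff
  have h1 : ∀ g, (sigmaUnion Gs).Cross S g → g.1 = q.1 := by
    rintro ⟨i, g⟩ hg
    by_contra hne
    apply hg
    change (⟨i, _⟩ : Σ i, (Gs i).V) ∈ S ↔ (⟨i, _⟩ : Σ i, (Gs i).V) ∈ S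
    rw [hS, hS]
    have : ¬ i = q.1 := hne
    simp [this]
  have h2 : {u | (⟨q.1, u⟩ : Σ i, (Gs i).V) ∈ S} = {u | ρ q.1 u ≤ ρ q.1 q.2} := by
    ext u
    change (⟨q.1, u⟩ : Σ i, (Gs i).V) ∈ S ↔ _
    rw [hS]
    simp
  have h3 := count_le M F S (Sigma.mk q.1 '' L q.1 {u | ρ q.1 u ≤ ρ q.1 q.2}) (by
    intro h hF hcr
    obtain ⟨g, hg, hg'⟩ := hc S q.1 h1 h hF hcr
    rw [h2] at hg'
    exact ⟨_, hg, _, hg', rfl⟩)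
  refine le_trans h3 ((Set.ncard_image_le (Set.toFinite _)).trans (hd q.1 _))

lemma del_count {k : ℕ} {G : Multigraph} {S : Set G.V} {e : G.E} {R : Set G.E}
    (h : G.delta S ≤ k + G.b1 e S) (hR : ∀ g ∈ R, G.Cross S g ∧ g ≠ e) : R.ncard ≤ k := by
  unfold b1 at h
  rw [delta_eq] at h
  split_ifs at h with hc
  · have h1 : R ⊆ {g | G.Cross S g} \ {e} := fun g hg => ⟨(hR g hg).1, (hR g hg).2⟩
    have h2 := Set.ncard_le_ncard h1 (Set.toFinite _)
    rw [Set.ncard_sdiff_singleton_of_mem hc] at h2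
    omega
  · have h1 : R ⊆ {g | G.Cross S g} := fun g hg => (hR g hg).1
    have h2 := Set.ncard_le_ncard h1 (Set.toFinite _)
    omega

lemma lift_count {k : ℕ} {G : Multigraph} {S : Set G.V} {e f : G.E} {R : Set G.E} (hef : e ≠ f)
    (h : G.delta S ≤ k + G.b2 e f S)
    (hR : ∀ g ∈ R, G.Cross S g ∧ (G.Cross S e → G.Cross S f → g ≠ e ∧ g ≠ f)) : R.ncard ≤ k := by
  unfold b2 at h
  rw [delta_eq] at h
  split_ifs at h with hc
  · have h1 : R ⊆ ({g | G.Cross S g} \ {e}) \ {f} := fun g hg =>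
      ⟨⟨(hR g hg).1, ((hR g hg).2 hc.1 hc.2).1⟩, ((hR g hg).2 hc.1 hc.2).2⟩
    have h2 := Set.ncard_le_ncard h1 (Set.toFinite _)
    rw [Set.ncard_sdiff_singleton_of_mem (show f ∈ {g | G.Cross S g} \ {e} from ⟨hc.2, hef.symm⟩),
      Set.ncard_sdiff_singleton_of_mem hc.1] at h2
    omega
  · have h1 : R ⊆ {g | G.Cross S g} := fun g hg => (hR g hg).1
    have h2 := Set.ncard_le_ncard h1 (Set.toFinite _)
    omega

lemma union_upper {k w : ℕ} (Gs : Fin (w + 1) → Multigraph) (x y : ∀ i, (Gs i).V)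
    (hG : ∀ i, Good k (Gs i) (x i) (y i)) (H : Multigraph) (hi : Immersion H (sigmaUnion Gs))
    (hiso : ¬ H.Isomorphic (sigmaUnion Gs)) : dcw k H ≤ w := by
  obtain ⟨M⟩ := hi
  have hni : ∀ v, ∃ e, (sigmaUnion Gs).Inc e v := by
    rintro ⟨i, v⟩
    obtain ⟨e, he⟩ := (hG i).no_isolated v
    refine ⟨⟨i, e⟩, ?_⟩
    rcases he with he | he
    · exact Or.inl (by subst he; rfl)
    · exact Or.inr (by subst he; rfl)
  have hε : ∀ i, Nonempty (Gs i).E := fun i => ⟨((hG i).no_isolated (x i)).choose⟩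
  let ε : ∀ i, (Gs i).E := fun i => (hε i).some
  -- edges deleted from `H`
  let F : Fin (w + 1) → Set H.E := fun i0 =>
    {h | ∃ i, i ≠ i0 ∧ (⟨i, ε i⟩ : Σ i, (Gs i).E) ∈ (M.emap h).edges}
  have hF : ∀ i0, (F i0).ncard ≤ w := by
    intro i0
    have h1 : ∀ h : H.E, ∃ i, h ∈ F i0 → i ≠ i0 ∧
        (⟨i, ε i⟩ : Σ i, (Gs i).E) ∈ (M.emap h).edges := by
      intro h
      by_cases hh : h ∈ F i0
      · obtain ⟨i, hi⟩ := hh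
        exact ⟨i, fun _ => hi⟩
      · exact ⟨i0, fun h' => absurd h' hh⟩
    choose γ hγ using h1
    have h2 : (F i0).ncard ≤ ({i0}ᶜ : Set (Fin (w + 1))).ncard := by
      refine Set.ncard_le_ncard_of_injOn γ (fun h hh => (hγ h hh).1) ?_ (Set.toFinite _)
      intro h hh h' hh' heq
      by_contra hne
      exact M.edgeDisj h h' hne _ (hγ h hh).2 (heq ▸ (hγ h' hh').2)
    have h3 := Set.ncard_add_ncard_compl ({i0} : Set (Fin (w + 1)))
    rw [Set.ncard_singleton, Nat.card_eq_fintype_card, Fintype.card_fin] at h3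
    omega
  rcases reduction M hiso hni with ⟨⟨i0, e⟩, he⟩ | ⟨⟨i0, e⟩, ⟨i1, f⟩, hef, ⟨⟨b0, b⟩, hb, hb'⟩, hq⟩
  · refine (core M (F i0) (fun i S => {g | (Gs i).Cross S g ∧ (i ≠ i0 → g ≠ ε i) ∧
      (⟨i, g⟩ : Σ i, (Gs i).E) ≠ ⟨i0, e⟩}) ?_ ?_).trans (hF i0)
    · intro i
      by_cases hii : i = i0
      · subst hii
        refine ((hG i).del e).mono fun S hS => del_count hS ?_
        rintro g ⟨hg, _, hg'⟩
        exact ⟨hg, fun h => hg' (by rw [h])⟩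
      · refine ((hG i).del (ε i)).mono fun S hS => del_count hS ?_
        rintro g ⟨hg, hg', _⟩
        exact ⟨hg, hg' hii⟩
    · intro S j hS h hhF hcr
      obtain ⟨⟨i, g⟩, hg, hgc⟩ := Walk.exists_cross S (M.emap h) hcr
      obtain rfl : i = j := hS _ hgc
      refine ⟨g, hg, hgc, fun hne heq => hhF ⟨i, hne, heq ▸ hg⟩, fun heq => he h (heq ▸ hg)⟩
  · have e1 : i0 = b0 := by
      rcases hb with hb | hb
      · exact congrArg Sigma.fst hb
      · exact congrArg Sigma.fst hb
    have e2 : i1 = b0 := by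
      rcases hb' with hb | hb
      · exact congrArg Sigma.fst hb
      · exact congrArg Sigma.fst hb
    subst e1
    subst e2
    have hef' : e ≠ f := fun h => hef (by rw [h])
    have hbe : (Gs i1).Inc e b := by
      rcases hb with hb | hb
      · exact Or.inl (eq_of_heq (Sigma.mk.inj hb).2)
      · exact Or.inr (eq_of_heq (Sigma.mk.inj hb).2)
    have hbf : (Gs i1).Inc f b := by
      rcases hb' with hb | hb
      · exact Or.inl (eq_of_heq (Sigma.mk.inj hb).2)
      · exact Or.inr (eq_of_heq (Sigma.mk.inj hb).2)
    refine (core M (F i1) (fun i S => {g | (Gs i).Cross S g ∧ (i ≠ i1 → g ≠ ε i) ∧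
      ∀ a c : (Gs i).E, (⟨i, a⟩ : Σ i, (Gs i).E) = ⟨i1, e⟩ → (⟨i, c⟩ : Σ i, (Gs i).E) = ⟨i1, f⟩ →
        (Gs i).Cross S a → (Gs i).Cross S c → g ≠ a ∧ g ≠ c}) ?_ ?_).trans (hF i1)
    · intro i
      by_cases hii : i = i1
      · subst hii
        refine ((hG i).lift e f hef' ⟨b, hbe, hbf⟩).mono fun S hS => lift_count hef' hS ?_
        rintro g ⟨hg, _, hg'⟩
        exact ⟨hg, hg' e f rfl rfl⟩
      · refine ((hG i).del (ε i)).mono fun S hS => del_count hS ?_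
        rintro g ⟨hg, hg', _⟩
        exact ⟨hg, hg' hii⟩
    · intro S j hS h hhF hcr
      by_cases hcc : (sigmaUnion Gs).Cross S ⟨i1, e⟩ ∧ (sigmaUnion Gs).Cross S ⟨i1, f⟩
      · obtain ⟨⟨i, g⟩, hg, hgc, hge, hgf⟩ := hq S h hcr hcc.1 hcc.2
        obtain rfl : i = j := hS _ hgc
        refine ⟨g, hg, hgc, fun hne heq => hhF ⟨i, hne, heq ▸ hg⟩, ?_⟩
        intro a c ha hc _ _
        refine ⟨fun h => hge ?_, fun h => hgf ?_⟩
        · rw [h]; exact ha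
        · rw [h]; exact hc
      · obtain ⟨⟨i, g⟩, hg, hgc⟩ := Walk.exists_cross S (M.emap h) hcr
        obtain rfl : i = j := hS _ hgc
        refine ⟨g, hg, hgc, fun hne heq => hhF ⟨i, hne, heq ▸ hg⟩, ?_⟩
        intro a c ha hc ha' hc'
        refine absurd ⟨?_, ?_⟩ hcc
        · rw [← ha]; exact ha'
        · rw [← hc]; exact hc'

/-- An isomorphism of disjoint unions of connected graphs matches the parts. -/
lemma iso_parts {m : ℕ} (A B : Fin m → Multigraph)
    (hA : ∀ i, Nonempty (A i).V) (hB : ∀ i, Nonempty (B i).V)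
    (hAc : ∀ i S, (A i).delta S = 0 → S = ∅ ∨ S = Set.univ)
    (h : Isomorphic (sigmaUnion A) (sigmaUnion B)) :
    ∃ π : Fin m → Fin m, Function.Bijective π ∧
      ∀ i, Nat.card (A i).E = Nat.card (B (π i)).E := by
  obtain ⟨φ⟩ := h
  have hends : ∀ e : (sigmaUnion A).E,
      (φ.fv ((sigmaUnion A).ends e).1).1 = (φ.fe e).1 ∧
      (φ.fv ((sigmaUnion A).ends e).2).1 = (φ.fe e).1 := by
    intro e
    rcases φ.pres e with h | h
    · exact ⟨(congrArg (fun p => p.1.1) h).symm, (congrArg (fun p => p.2.1) h).symm⟩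
    · exact ⟨(congrArg (fun p => p.2.1) h).symm, (congrArg (fun p => p.1.1) h).symm⟩
  have h1 : ∀ i, ∃ j, ∀ v : (A i).V, (φ.fv ⟨i, v⟩).1 = j := by
    intro i
    obtain ⟨v0⟩ := hA i
    refine ⟨(φ.fv ⟨i, v0⟩).1, ?_⟩
    have h2 := hAc i {v | (φ.fv ⟨i, v⟩).1 = (φ.fv ⟨i, v0⟩).1} (by
      rw [delta_eq, Set.ncard_eq_zero (Set.toFinite _)]
      ext e
      refine ⟨fun he => he ?_, fun h => h.elim⟩
      obtain ⟨h3, h4⟩ := hends ⟨i, e⟩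
      have h5 := h3.trans h4.symm
      change (φ.fv ⟨i, ((A i).ends e).1⟩).1 = (φ.fv ⟨i, ((A i).ends e).2⟩).1 at h5
      change (φ.fv ⟨i, ((A i).ends e).1⟩).1 = _ ↔ (φ.fv ⟨i, ((A i).ends e).2⟩).1 = _
      rw [h5])
    rcases h2 with h2 | h2
    · have : v0 ∈ (∅ : Set (A i).V) := by
        rw [← h2]
        rfl
      exact this.elim
    · intro v
      have : v ∈ (Set.univ : Set (A i).V) := trivial
      rw [← h2] at this
      exact this
  choose π hπ using h1
  have hsurj : Function.Surjective π := by
    intro j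
    obtain ⟨b⟩ := hB j
    refine ⟨(φ.fv.symm ⟨j, b⟩).1, ?_⟩
    rw [← hπ _ (φ.fv.symm ⟨j, b⟩).2]
    change (φ.fv (φ.fv.symm ⟨j, b⟩)).1 = j
    exact congrArg Sigma.fst (Equiv.apply_symm_apply φ.fv ⟨j, b⟩)
  have hbij : Function.Bijective π := ⟨Finite.injective_iff_surjective.mpr hsurj, hsurj⟩
  refine ⟨π, hbij, fun i => ?_⟩
  have h6 : ∀ e : (sigmaUnion A).E, e.1 = i ↔ (φ.fe e).1 = π i := by
    intro e
    rw [← (hends e).1]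
    have : (φ.fv ((sigmaUnion A).ends e).1).1 = π e.1 := hπ e.1 _
    rw [this, hbij.1.eq_iff]
  have E1 : {e : Σ i, (A i).E // e.1 = i} ≃ {e : Σ i, (B i).E // e.1 = π i} :=
    φ.fe.subtypeEquiv h6
  exact Nat.card_congr (((Equiv.sigmaSubtype i).symm.trans E1).trans (Equiv.sigmaSubtype (π i)))

lemma sym_rep {n m : ℕ} (s : Sym (Fin n) m) :
    ∃ a : Fin m → Fin n, (Finset.univ : Finset (Fin m)).val.map a = s.1 := by
  obtain ⟨s, hs⟩ := s
  obtain ⟨l, rfl⟩ := Quot.exists_rep s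
  have : l.length = m := hs
  subst this
  refine ⟨l.get, ?_⟩
  rw [Fin.univ_val_map, List.ofFn_get]
  rfl

end Multigraph

open Multigraph in
/-- for `k ≥ 7`, `obs_{≤i}(C_{w,k})` contains at least
`binom(3^(k−7)+w+1, w+1)` pairwise non-isomorphic graphs. -/
theorem dcw_obstruction_count_lower_bound (k w : ℕ) (hk : 7 ≤ k) :
    ∃ Gs : Fin (Nat.choose (3 ^ (k - 7) + w + 1) (w + 1)) → Multigraph,
      (∀ i, Gs i ∈ obstructions Immersion (dcwClass w k)) ∧
      ∀ i j, i ≠ j → ¬ Isomorphic (Gs i) (Gs j) := by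
  have hpow : 3 ^ (k - 7) ≤ 3 ^ (k - 2) := Nat.pow_le_pow_right (by norm_num) (by omega)
  have hk2 : 2 + (k - 2) = k := by omega
  have hT : ∀ i : Fin (3 ^ (k - 7) + 1), ∃ (G : Multigraph) (x y : G.V), Good k G x y ∧
      Nat.card G.E = 9 * i.val + 5 * (3 ^ (k - 2) - i.val) := by
    intro i
    have := exists_good (k - 2) i.val (3 ^ (k - 2) - i.val) (by omega)
    rwa [hk2] at this
  choose T x y hG hcard using hT
  have hinj : ∀ i j, Nat.card (T i).E = Nat.card (T j).E → i = j := by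
    intro i j h
    rw [hcard, hcard] at h
    apply Fin.ext
    omega
  choose a ha using fun s : Sym (Fin (3 ^ (k - 7) + 1)) (w + 1) => sym_rep s
  have hcs : Fintype.card (Sym (Fin (3 ^ (k - 7) + 1)) (w + 1)) =
      Nat.choose (3 ^ (k - 7) + w + 1) (w + 1) := by
    rw [Sym.card_sym_eq_multichoose, Nat.multichoose_eq, Fintype.card_fin]
    have : 3 ^ (k - 7) + 1 + (w + 1) - 1 = 3 ^ (k - 7) + w + 1 := by
      generalize 3 ^ (k - 7) = N
      omega
    rw [this]
  let q := (Fintype.equivFinOfCardEq hcs).symm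
  refine ⟨fun i => sigmaUnion (fun r => T (a (q i) r)), fun i => ⟨?_, ?_⟩, ?_⟩
  · exact union_lower _ _ _ (fun r => hG (a (q i) r))
  · intro H hH hiso
    exact union_upper _ _ _ (fun r => hG (a (q i) r)) H hH hiso
  · intro i j hij hiso
    obtain ⟨π, hπ, hc⟩ := iso_parts _ _ (fun r => ⟨x _⟩) (fun r => ⟨x _⟩)
      (fun r => (hG (a (q i) r)).conn) hiso
    apply hij
    apply q.injective
    apply Subtype.ext
    have h1 : a (q i) = a (q j) ∘ π := funext fun r => hinj _ _ (hc r)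
    rw [← ha (q i), ← ha (q j), h1, ← Multiset.map_map]
    congr 1
    have := Finset.map_univ_equiv (Equiv.ofBijective π hπ)
    exact congrArg Finset.val this
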